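/- arXiv:1205.1726 — 2 statements merged into one kernel-verified Lean document; each statement's English description precedes it below -/
import Mathlib

section
/- Let K be an ordinary differential field of characteristic zero whose field of constants k = K^δ is algebraically closed, and let L|K be a differential field extension. Then L|K is a Picard-Vessiot extension if and only if: (1) L is generated as a field over K by a finite-dimensional k-vector subspace V ⊆ L; (2) there is a group G of differential field automorphisms of L over K with G(V) ⊆ V and fixed field L^G = K; and (3) L^δ = k (no new constants). -/
/-- The subfield of constants of an ordinary differential field. -/
def constantSubfieldO {K : Type*} [Field K] (δ : Derivation ℤ K K) : Subfield K where
  carrier := {a | δ a = 0}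
  mul_mem' := by
    intro a b ha hb
    have ha' : δ a = 0 := ha
    have hb' : δ b = 0 := hb
    show δ (a * b) = 0
    simp [Derivation.leibniz, ha', hb']
  one_mem' := by show δ 1 = 0; simp
  add_mem' := by
    intro a b ha hb
    have ha' : δ a = 0 := ha
    have hb' : δ b = 0 := hb
    show δ (a + b) = 0
    simp [ha', hb']
  zero_mem' := by show δ 0 = 0; simp
  neg_mem' := by
    intro a ha
    have ha' : δ a = 0 := ha
    show δ (-a) = 0
    simp [ha']
  inv_mem' := by
    intro a ha
    have ha' : δ a = 0 := ha
    show δ a⁻¹ = 0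
    rw [Derivation.leibniz_inv, ha']
    simp

/-- `L|K` is an (ordinary) Picard-Vessiot extension: `L^δ = K^δ` and `L` is generated by a
fundamental solution matrix of a linear system `δ(y) = Ay` over `K`. -/
def IsPicardVessiotO (K L : Type*) [Field K] [Field L] [Algebra K L]
    (δK : Derivation ℤ K K) (δL : Derivation ℤ L L) : Prop :=
  (∀ a : L, δL a = 0 → ∃ c : K, δK c = 0 ∧ algebraMap K L c = a) ∧
  ∃ (n : ℕ) (A : Matrix (Fin n) (Fin n) K) (Y : GL (Fin n) L),
    ((Y : Matrix (Fin n) (Fin n) L)).map (fun x => δL x)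
      = A.map (algebraMap K L) * (Y : Matrix (Fin n) (Fin n) L) ∧
    IntermediateField.adjoin K {x : L | ∃ p q, (Y : Matrix (Fin n) (Fin n) L) p q = x} = ⊤

/-!
Let `Y` be a fundamental matrix of `L|K`. In `L ⊗[K] L` the matrix `Z = Y⁻¹ ⊗ Y` is constant, and
by the nonvanishing of Wronskians `L` is linearly disjoint over `k` from the `k`-algebra `k[Z]`. By
the Nullstellensatz, every non-nilpotent element of `L[Z]` stays nonzero under some specialization
of `Z` to an invertible matrix `C` over `k`, and `Y ↦ Y C` then defines a differential automorphism
of `L`. If `a ∈ L` is not in `K`, then `a ⊗ 1 - 1 ⊗ a` is not nilpotent, so some such automorphism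
moves `a`: the fixed field of the differential Galois group is `K`. The `k`-span of the entries of
`Y` is stable under this group because `Y⁻¹ σ(Y)` is constant.

Conversely, let `W` be the Wronskian matrix of a basis of the stable subspace `V`. Each `σ ∈ G` acts
by `σ(W) = W C` with `C` constant, so the logarithmic derivative `δ(W) W⁻¹` is fixed by `G` and
hence has entries in `K`.
-/

open scoped TensorProduct

section MatrixLogDeriv

variable {R T n : Type*} [CommRing R] [CommRing T] [Algebra R T] [Fintype n]

theorem matrix_map_derivation_mul (D : Derivation R T T) (M N : Matrix n n T) :
    (M * N).map D = M.map D * N + M * N.map D := by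
  ext i j
  simp only [Matrix.map_apply, Matrix.mul_apply, Matrix.add_apply, map_sum, Derivation.leibniz,
    smul_eq_mul, ← Finset.sum_add_distrib]
  exact Finset.sum_congr rfl fun l _ => by ring

variable [DecidableEq n]

/-- The logarithmic derivative `D(U) U⁻¹` of an invertible matrix: `U` is a fundamental matrix of
the linear system `D(y) = A y` if and only if its logarithmic derivative is `A`. -/
noncomputable def matrixLogDeriv (D : Derivation R T T) (U : GL n T) : Matrix n n T :=
  (U : Matrix n n T).map D * (U⁻¹ : GL n T)

theorem matrixLogDeriv_eq_iff {D : Derivation R T T} {U : GL n T} {A : Matrix n n T} :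
    matrixLogDeriv D U = A ↔ (U : Matrix n n T).map D = A * U :=
  Units.mul_inv_eq_iff_eq_mul U

theorem matrixLogDeriv_eq_matrixLogDeriv_iff {D : Derivation R T T} {U V : GL n T} :
    matrixLogDeriv D V = matrixLogDeriv D U ↔ ((U⁻¹ * V : GL n T) : Matrix n n T).map D = 0 := by
  obtain ⟨C, rfl⟩ : ∃ C, V = U * C := ⟨U⁻¹ * V, (mul_inv_cancel_left U V).symm⟩
  rw [inv_mul_cancel_left, matrixLogDeriv_eq_iff, Units.val_mul, matrix_map_derivation_mul,
    ← mul_assoc, ← matrixLogDeriv_eq_iff.1 rfl, add_eq_left, Units.mul_right_eq_zero]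

theorem matrixLogDeriv_eq_matrixLogDeriv_iff_exists {D : Derivation R T T}
    (hD : ∀ a, D a = 0 → a ∈ (algebraMap R T).range) {U V : GL n T} :
    matrixLogDeriv D V = matrixLogDeriv D U ↔
      ∃ C : Matrix n n R, (V : Matrix n n T) = (U : Matrix n n T) * C.map (algebraMap R T) := by
  simp_rw [matrixLogDeriv_eq_matrixLogDeriv_iff, ← Units.inv_mul_eq_iff_eq_mul, ← Units.val_mul]
  constructor
  · intro h
    choose C hC using fun p q => hD _ (congrFun₂ h p q)
    exact ⟨Matrix.of C, Matrix.ext fun p q => (hC p q).symm⟩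
  · rintro ⟨C, hC⟩
    rw [hC]
    ext p q
    exact D.map_algebraMap _

theorem matrixLogDeriv_map {S : Type*} [CommRing S] [Algebra R S] {D : Derivation R T T}
    {E : Derivation R S S} {f : T →+* S} (hf : ∀ t, E (f t) = f (D t)) (U : GL n T) :
    matrixLogDeriv E (Matrix.GeneralLinearGroup.map f U) = (matrixLogDeriv D U).map f := by
  rw [matrixLogDeriv, matrixLogDeriv, Matrix.map_mul, ← map_inv]
  congr 1
  ext i j
  exact hf _

end MatrixLogDeriv

section Wronskian

variable {k L : Type*} [CommRing k] [CommRing L] [Algebra k L] (δ : Derivation k L L)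

/-- The Wronskian matrix of a family `y`, whose `i`-th row consists of the `i`-th derivatives
of the `y j`. -/
def wronskianMatrix {n : ℕ} (y : Fin n → L) : Matrix (Fin n) (Fin n) L :=
  Matrix.of fun i j => ((δ : L →ₗ[k] L) ^ (i : ℕ)) (y j)

theorem wronskianMatrix_sum_smul {n : ℕ} (y : Fin n → L) (C : Matrix (Fin n) (Fin n) k) :
    wronskianMatrix δ (fun j => ∑ l, C l j • y l) =
      wronskianMatrix δ y * C.map (algebraMap k L) := by
  ext i j
  simp only [wronskianMatrix, Matrix.of_apply, Matrix.mul_apply, Matrix.map_apply, map_sum,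
    map_smul]
  exact Finset.sum_congr rfl fun l _ => (Algebra.smul_def _ _).trans (mul_comm _ _)

variable {δ}

theorem wronskianMatrix_map {f : L → L} (hf : ∀ a, f (δ a) = δ (f a)) {n : ℕ} (y : Fin n → L) :
    (wronskianMatrix δ y).map f = wronskianMatrix δ (f ∘ y) := by
  have hf' : Function.Commute f δ := hf
  ext i j
  simpa only [wronskianMatrix, Matrix.map_apply, Matrix.of_apply, Module.End.pow_apply,
    Derivation.coeFn_coe, Function.comp_apply]
    using hf'.iterate_right i (y j)

end Wronskian

section WronskianField

variable {k L : Type*} [Field k] [Field L] [Algebra k L] {δ : Derivation k L L}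

/-- Normalise one coefficient of the relation to `1`: differentiating it then gives a relation of
the same kind between fewer functions. -/
theorem eq_zero_of_sum_mul_derivation_pow_eq_zero
    (hδ : ∀ a, δ a = 0 → a ∈ (algebraMap k L).range) {n : ℕ} {y : Fin n → L}
    (hy : LinearIndependent k y) {c : Fin n → L}
    (hc : ∀ i < n, ∑ j, c j * ((δ : L →ₗ[k] L) ^ i) (y j) = 0) : c = 0 := by
  induction n with
  | zero => exact Subsingleton.elim _ _
  | succ n ih =>
    have hy' : LinearIndependent k (Fin.tail y) := hy.comp _ (Fin.succ_injective n)
    have tail_eq_zero {c : Fin (n + 1) → L} (h0 : c 0 = 0)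
        (hc : ∀ i < n, ∑ j, c j * ((δ : L →ₗ[k] L) ^ i) (y j) = 0) : c = 0 := by
      have htail : Fin.tail c = 0 := ih hy' fun i hi => by
        simpa only [Fin.sum_univ_succ, h0, zero_mul, zero_add, Fin.tail] using hc i hi
      exact funext (Fin.cases h0 (congrFun htail))
    by_contra hne
    have h0 : c 0 ≠ 0 := fun h0 => hne (tail_eq_zero h0 fun i hi => hc i (hi.trans n.lt_succ_self))
    let e : Fin (n + 1) → L := fun j => c j / c 0
    have he0 : e 0 = 1 := div_self h0
    have he : ∀ i < n + 1, ∑ j, e j * ((δ : L →ₗ[k] L) ^ i) (y j) = 0 := fun i hi => by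
      simp only [e, div_mul_eq_mul_div, ← Finset.sum_div, hc i hi, zero_div]
    have hδe : (fun j => δ (e j)) = 0 := by
      refine tail_eq_zero (by rw [he0, δ.map_one_eq_zero]) fun i hi => ?_
      have hsucc : ∑ j, e j * δ (((δ : L →ₗ[k] L) ^ i) (y j)) = 0 := by
        simpa only [pow_succ', Module.End.mul_apply, Derivation.coeFn_coe]
          using he (i + 1) (Nat.succ_lt_succ hi)
      have hderiv : δ (∑ j, e j * ((δ : L →ₗ[k] L) ^ i) (y j)) = 0 := by
        rw [he i (hi.trans n.lt_succ_self), map_zero]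
      simpa only [map_sum, δ.leibniz, smul_eq_mul, Finset.sum_add_distrib, hsucc, zero_add,
        mul_comm] using hderiv
    choose f hf using fun j => hδ _ (congrFun hδe j)
    have hf0 : f 0 = 0 := by
      refine Fintype.linearIndependent_iff.1 hy f ?_ 0
      simpa [Algebra.smul_def, hf] using he 0 n.succ_pos
    simpa [hf0, he0] using hf 0

theorem isUnit_det_wronskianMatrix (hδ : ∀ a, δ a = 0 → a ∈ (algebraMap k L).range) {n : ℕ}
    {y : Fin n → L} (hy : LinearIndependent k y) : IsUnit (wronskianMatrix δ y).det := by
  rw [isUnit_iff_ne_zero]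
  intro hdet
  obtain ⟨c, hc, hWc⟩ := Matrix.exists_mulVec_eq_zero_iff.2 hdet
  refine hc (eq_zero_of_sum_mul_derivation_pow_eq_zero hδ hy fun i hi => ?_)
  simpa only [Matrix.mulVec, dotProduct, wronskianMatrix, Matrix.of_apply, mul_comm,
    Pi.zero_apply] using congrFun hWc ⟨i, hi⟩

end WronskianField

section LinearDisjointness

theorem exists_sum_tmul_linearIndependent_left {k V W : Type*} [Field k] [AddCommGroup V]
    [Module k V] [AddCommGroup W] [Module k W] (x : V ⊗[k] W) :
    ∃ (n : ℕ) (y : Fin n → V) (w : Fin n → W), LinearIndependent k y ∧ x = ∑ j, y j ⊗ₜ w j := by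
  let e := Module.Basis.ofVectorSpace k V
  obtain ⟨w, rfl⟩ := TensorProduct.eq_repr_basis_left e x
  let s := w.support.equivFin.symm
  refine ⟨_, fun j => e (s j), fun j => w (s j),
    e.linearIndependent.comp _ (Subtype.val_injective.comp s.injective), ?_⟩
  rw [s.sum_comp fun i => e i ⊗ₜ w i]
  exact (Finset.sum_coe_sort _ fun i => e i ⊗ₜ w i).symm

variable {k L T : Type*} [Field k] [Field L] [Algebra k L] [CommRing T] [Algebra L T] [Algebra k T]
  {δ : Derivation k L L} {D : Derivation k T T}

/-- Differentiating the relation repeatedly gives a linear system for the constants `β j` whose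
matrix is the Wronskian matrix of `y`. -/
theorem eq_zero_of_sum_smul_constant_eq_zero (hδ : ∀ a, δ a = 0 → a ∈ (algebraMap k L).range)
    (hD : ∀ l, D (algebraMap L T l) = algebraMap L T (δ l)) {n : ℕ} {y : Fin n → L}
    (hy : LinearIndependent k y) {β : Fin n → T} (hβ : ∀ j, D (β j) = 0)
    (h : ∑ j, y j • β j = 0) : β = 0 := by
  have hiter (i : ℕ) : ∑ j, ((δ : L →ₗ[k] L) ^ i) (y j) • β j = 0 := by
    induction i with
    | zero => simpa using h
    | succ i ih =>
      simpa [Algebra.smul_def, hD, hβ, pow_succ', mul_comm] using congrArg D ih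
  have hW : IsUnit ((wronskianMatrix δ y).map (algebraMap L T)) := by
    rw [Matrix.isUnit_iff_isUnit_det, ← RingHom.mapMatrix_apply, ← RingHom.map_det]
    exact (isUnit_det_wronskianMatrix hδ hy).map _
  refine Matrix.mulVec_injective_of_isUnit hW ?_
  ext i
  simpa [Matrix.mulVec, dotProduct, wronskianMatrix, Algebra.smul_def] using hiter i

theorem productLeftAlgHom_val_injective_of_constants [IsScalarTower k L T]
    (hδ : ∀ a, δ a = 0 → a ∈ (algebraMap k L).range)
    (hD : ∀ l, D (algebraMap L T l) = algebraMap L T (δ l)) {B : Subalgebra k T}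
    (hB : ∀ b ∈ B, D b = 0) :
    Function.Injective (Algebra.TensorProduct.productLeftAlgHom (Algebra.ofId L T) B.val) := by
  rw [injective_iff_map_eq_zero]
  intro x hx
  obtain ⟨n, y, β, hy, rfl⟩ := exists_sum_tmul_linearIndependent_left x
  have hβ : (fun j => (β j : T)) = 0 :=
    eq_zero_of_sum_smul_constant_eq_zero hδ hD hy (fun j => hB _ (β j).2) <| by
      simpa [Algebra.smul_def, Algebra.ofId_apply] using hx
  refine Finset.sum_eq_zero fun j _ => ?_
  rw [show β j = 0 from Subtype.ext (congrFun hβ j), TensorProduct.tmul_zero]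

end LinearDisjointness

section Specialization

theorem exists_isMaximal_notMem_of_not_isNilpotent {B : Type*} [CommRing B] [IsJacobsonRing B]
    {β : B} (hβ : ¬ IsNilpotent β) : ∃ m : Ideal B, m.IsMaximal ∧ β ∉ m := by
  by_contra! h
  refine hβ (mem_nilradical.1 ?_)
  rw [nilradical, ← IsJacobsonRing.out' _ (Ideal.radical_isRadical (0 : Ideal B))]
  exact Ideal.mem_sInf.2 fun {J} hJ => h J hJ.2

variable {k B : Type*} [Field k] [IsAlgClosed k] [CommRing B] [Algebra k B]
  [Algebra.FiniteType k B]

theorem exists_algHom_apply_ne_zero_of_not_isNilpotent {β : B} (hβ : ¬ IsNilpotent β) :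
    ∃ χ : B →ₐ[k] k, χ β ≠ 0 := by
  have := isJacobsonRing_of_finiteType (A := k) (B := B)
  obtain ⟨m, hm, hβm⟩ := exists_isMaximal_notMem_of_not_isNilpotent hβ
  let := Ideal.Quotient.field m
  have := finite_of_finite_type_of_isJacobsonRing k (B ⧸ m)
  let e : k ≃ₐ[k] B ⧸ m := AlgEquiv.ofBijective (Algebra.ofId k _)
    IsAlgClosed.algebraMap_bijective_of_isIntegral
  refine ⟨(e.symm : (B ⧸ m) →ₐ[k] k).comp (Ideal.Quotient.mkₐ k m), fun h => hβm ?_⟩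
  rw [← Ideal.Quotient.eq_zero_iff_mem]
  simpa using h

theorem exists_algHom_productLeftAlgHom_ne_zero {L : Type*} [Field L] [Algebra k L] {x : L ⊗[k] B}
    (hx : ¬ IsNilpotent x) : ∃ χ : B →ₐ[k] k, Algebra.TensorProduct.productLeftAlgHom
      (AlgHom.id L L) ((Algebra.ofId k L).comp χ) x ≠ 0 := by
  obtain ⟨n, y, β, hy, rfl⟩ := exists_sum_tmul_linearIndependent_left x
  obtain ⟨j, hj⟩ : ∃ j, ¬ IsNilpotent (β j) := by
    by_contra! hβ
    exact hx (isNilpotent_sum fun j _ => (hβ j).imp fun N hN => by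
      rw [Algebra.TensorProduct.tmul_pow, hN, TensorProduct.tmul_zero])
  obtain ⟨χ, hχ⟩ := exists_algHom_apply_ne_zero_of_not_isNilpotent (k := k) hj
  refine ⟨χ, fun h => hχ ?_⟩
  refine Fintype.linearIndependent_iff.1 hy (fun j => χ (β j)) ?_ j
  simpa [Algebra.smul_def, Algebra.ofId_apply, mul_comm] using h

end Specialization

theorem exists_algHom_adjoin_constants_ne_zero {k L T : Type*} [Field k] [IsAlgClosed k] [Field L]
    [Algebra k L] [CommRing T] [Algebra L T] [Algebra k T] [IsScalarTower k L T]
    {δ : Derivation k L L} {D : Derivation k T T}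
    (hδ : ∀ a, δ a = 0 → a ∈ (algebraMap k L).range)
    (hD : ∀ l, D (algebraMap L T l) = algebraMap L T (δ l)) {s : Set T} (hfin : s.Finite)
    (hs : ∀ b ∈ s, D b = 0) {t : Algebra.adjoin L s} (ht : ¬ IsNilpotent t) :
    ∃ θ : Algebra.adjoin L s →ₐ[L] L, θ t ≠ 0 ∧
      ∀ b : s, θ ⟨b, Algebra.subset_adjoin b.2⟩ ∈ (algebraMap k L).range := by
  let B := Algebra.adjoin k s
  have : Algebra.FiniteType k B := Algebra.FiniteType.adjoin_of_finite hfin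
  have hB : ∀ b ∈ B, D b = 0 := Derivation.eqOn_adjoin (D1 := D) (D2 := 0) hs
  let μ := Algebra.TensorProduct.productLeftAlgHom (Algebra.ofId L T) B.val
  have hμB (b : B) : μ (1 ⊗ₜ b) = b := by simp [μ]
  have hle : Algebra.adjoin L s ≤ μ.range :=
    Algebra.adjoin_le fun b hb => ⟨1 ⊗ₜ ⟨b, Algebra.subset_adjoin hb⟩, hμB _⟩
  let e : L ⊗[k] B ≃ₐ[L] μ.range :=
    AlgEquiv.ofInjective μ (productLeftAlgHom_val_injective_of_constants hδ hD hB)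
  let ι : Algebra.adjoin L s →ₐ[L] L ⊗[k] B :=
    (e.symm : μ.range →ₐ[L] L ⊗[k] B).comp (Subalgebra.inclusion hle)
  have hι_mem (b : s) : ι ⟨b, Algebra.subset_adjoin b.2⟩ = 1 ⊗ₜ ⟨b, Algebra.subset_adjoin b.2⟩ :=
    e.symm_apply_eq.2 (Subtype.ext (hμB ⟨b, _⟩).symm)
  have hι : Function.Injective ι := e.symm.injective.comp (Subalgebra.inclusion_injective hle)
  obtain ⟨χ, hχ⟩ := exists_algHom_productLeftAlgHom_ne_zero ((IsNilpotent.map_iff hι).not.2 ht)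
  refine ⟨(Algebra.TensorProduct.productLeftAlgHom (AlgHom.id L L)
    ((Algebra.ofId k L).comp χ)).comp ι, hχ, fun b => ⟨χ ⟨b, Algebra.subset_adjoin b.2⟩, ?_⟩⟩
  simp [hι_mem, Algebra.ofId_apply]

section NonNilpotence

variable {K : Type*} [Field K]

theorem not_isNilpotent_tmul_one_sub_one_tmul_of_algHom {A S F : Type*} [CommRing A] [Algebra K A]
    [CommRing S] [Algebra K S] [CommRing F] [IsReduced F] [Algebra K F] {f : S →ₐ[K] A}
    (hf : Function.Injective f) {g h : S →ₐ[K] F} {s : S} (hs : g s ≠ h s) :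
    ¬ IsNilpotent (f s ⊗ₜ[K] (1 : A) - 1 ⊗ₜ f s) := by
  intro hnil
  have hinj : Function.Injective (Algebra.TensorProduct.map f f) :=
    TensorProduct.map_injective_of_flat_flat f.toLinearMap f.toLinearMap hf hf
  have hs_nil : IsNilpotent (s ⊗ₜ[K] (1 : S) - 1 ⊗ₜ s) := by
    rw [← IsNilpotent.map_iff hinj]
    simpa using hnil
  refine hs (sub_eq_zero.1 ?_)
  simpa using (hs_nil.map (Algebra.TensorProduct.productMap g h)).eq_zero

variable {L : Type*} [Field L] [Algebra K L] {a : L}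

theorem not_isNilpotent_tmul_one_sub_one_tmul_of_transcendental (ha : Transcendental K a) :
    ¬ IsNilpotent (a ⊗ₜ[K] (1 : L) - 1 ⊗ₜ a) := by
  have h := not_isNilpotent_tmul_one_sub_one_tmul_of_algHom (transcendental_iff_injective.1 ha)
    (g := Polynomial.aeval (0 : K)) (h := Polynomial.aeval (1 : K)) (s := Polynomial.X) (by simp)
  rwa [Polynomial.aeval_X] at h

theorem not_isNilpotent_tmul_one_sub_one_tmul_of_isAlgebraic [PerfectField K]
    (hal : IsAlgebraic K a) (ha : a ∉ (algebraMap K L).range) :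
    ¬ IsNilpotent (a ⊗ₜ[K] (1 : L) - 1 ⊗ₜ a) := by
  let E := IntermediateField.adjoin K {a}
  let s : E := IntermediateField.AdjoinSimple.gen K a
  have : Algebra.IsAlgebraic K E := IntermediateField.isAlgebraic_adjoin_simple hal.isIntegral
  let g : E →ₐ[K] AlgebraicClosure K := IsAlgClosed.lift
  obtain ⟨τ, hτ⟩ : ∃ τ : Gal(AlgebraicClosure K/K), g s ≠ τ (g s) := by
    by_contra! hfix
    obtain ⟨x, hx⟩ := (InfiniteGalois.mem_range_algebraMap_iff_fixed (g s)).2 fun τ => (hfix τ).symm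
    rw [← g.commutes] at hx
    exact ha ⟨x, congrArg E.val (g.injective hx)⟩
  exact not_isNilpotent_tmul_one_sub_one_tmul_of_algHom (f := E.val) E.val.injective
    (g := g) (h := τ.toAlgHom.comp g) hτ

theorem not_isNilpotent_tmul_one_sub_one_tmul [PerfectField K] (ha : a ∉ (algebraMap K L).range) :
    ¬ IsNilpotent (a ⊗ₜ[K] (1 : L) - 1 ⊗ₜ a) := by
  by_cases hal : IsAlgebraic K a
  · exact not_isNilpotent_tmul_one_sub_one_tmul_of_isAlgebraic hal ha
  · exact not_isNilpotent_tmul_one_sub_one_tmul_of_transcendental hal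

end NonNilpotence

section TensorDerivation

theorem derivation_smul_of_compat {k K A : Type*} [CommRing k] [CommRing K] [CommRing A]
    [Algebra k K] [Algebra K A] [Algebra k A] {δK : Derivation k K K} {δA : Derivation k A A}
    (hA : ∀ x, δA (algebraMap K A x) = algebraMap K A (δK x)) (x : K) (a : A) :
    δA (x • a) = δK x • a + x • δA a := by
  rw [Algebra.smul_def, δA.leibniz, hA, smul_eq_mul, smul_eq_mul, Algebra.smul_def,
    Algebra.smul_def]
  ring

variable {k K A B : Type*} [CommRing k] [CommRing K] [CommRing A] [CommRing B] [Algebra k K]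
  [Algebra K A] [Algebra K B] [Algebra k A] [Algebra k B]
  {δK : Derivation k K K} {δA : Derivation k A A} {δB : Derivation k B B}
  (hA : ∀ x, δA (algebraMap K A x) = algebraMap K A (δK x))
  (hB : ∀ x, δB (algebraMap K B x) = algebraMap K B (δK x))

/-- The additive map underlying `tensorDerivation`. Neither of its two summands is well defined on
`A ⊗[K] B` on its own, as the derivations are not `K`-linear. -/
noncomputable def tensorDerivationAddHom : A ⊗[K] B →+ A ⊗[K] B :=
  let m : A →+ B →+ A ⊗[K] B :=
    LinearMap.toAddMonoidHom'.comp (TensorProduct.mk K A B).toAddMonoidHom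
  TensorProduct.liftAddHom
    (m.comp (δA : A →ₗ[k] A).toAddMonoidHom + m.compl₂ (δB : B →ₗ[k] B).toAddMonoidHom)
    fun x a b => by
      change δA (x • a) ⊗ₜ b + (x • a) ⊗ₜ δB b = δA a ⊗ₜ (x • b) + a ⊗ₜ δB (x • b)
      simp only [derivation_smul_of_compat hA, derivation_smul_of_compat hB,
        TensorProduct.add_tmul, TensorProduct.tmul_add, TensorProduct.smul_tmul]
      abel

theorem tensorDerivationAddHom_tmul (a : A) (b : B) :
    tensorDerivationAddHom hA hB (a ⊗ₜ b) = δA a ⊗ₜ b + a ⊗ₜ δB b :=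
  rfl

theorem tensorDerivationAddHom_mul (s t : A ⊗[K] B) :
    tensorDerivationAddHom hA hB (s * t) =
      s * tensorDerivationAddHom hA hB t + t * tensorDerivationAddHom hA hB s := by
  induction s with
  | zero => simp only [zero_mul, mul_zero, map_zero, add_zero]
  | add x y hx hy => simp only [add_mul, mul_add, map_add, hx, hy]; abel
  | tmul a b =>
    induction t with
    | zero => simp only [zero_mul, mul_zero, map_zero, add_zero]
    | add x y hx hy => simp only [add_mul, mul_add, map_add, hx, hy]; abel
    | tmul c d =>
      simp only [Algebra.TensorProduct.tmul_mul_tmul, tensorDerivationAddHom_tmul,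
        Derivation.leibniz, smul_eq_mul, mul_add, TensorProduct.add_tmul, TensorProduct.tmul_add,
        mul_comm c, mul_comm d]
      abel

variable [IsScalarTower k K A]

/-- The derivation `δA ⊗ 1 + 1 ⊗ δB` of `A ⊗[K] B`, where `δA` and `δB` extend the same derivation
of `K`. -/
noncomputable def tensorDerivation : Derivation k (A ⊗[K] B) (A ⊗[K] B) :=
  Derivation.mk'
    { tensorDerivationAddHom hA hB with
      map_smul' := fun c t => by
        change tensorDerivationAddHom hA hB (c • t) = c • tensorDerivationAddHom hA hB t
        induction t with
        | zero => simp only [smul_zero, map_zero]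
        | add s t hs ht => simp only [smul_add, map_add, hs, ht]
        | tmul a b => simp only [TensorProduct.smul_tmul', tensorDerivationAddHom_tmul,
            δA.map_smul, smul_add] }
    (tensorDerivationAddHom_mul hA hB)

theorem tensorDerivation_tmul_one (a : A) : tensorDerivation hA hB (a ⊗ₜ 1) = δA a ⊗ₜ 1 := by
  change δA a ⊗ₜ 1 + a ⊗ₜ δB 1 = _
  rw [δB.map_one_eq_zero, TensorProduct.tmul_zero, add_zero]

theorem tensorDerivation_one_tmul (b : B) : tensorDerivation hA hB (1 ⊗ₜ b) = 1 ⊗ₜ δB b := by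
  change δA 1 ⊗ₜ b + 1 ⊗ₜ δB b = _
  rw [δA.map_one_eq_zero, TensorProduct.zero_tmul, zero_add]

end TensorDerivation

section Torsor

/-- The set of entries of a matrix. -/
def matrixEntries {n T : Type*} (M : Matrix n n T) : Set T :=
  {x | ∃ p q, M p q = x}

theorem finite_matrixEntries {n T : Type*} [Finite n] (M : Matrix n n T) :
    (matrixEntries M).Finite := by
  refine (Set.finite_range fun p : n × n => M p.1 p.2).subset ?_
  rintro _ ⟨p, q, rfl⟩
  exact ⟨(p, q), rfl⟩

variable {k K L n : Type*} [CommRing k] [CommRing K] [CommRing L] [Algebra k K] [Algebra K L]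
  [Algebra k L] [IsScalarTower k K L] [Fintype n] [DecidableEq n]

variable (K) in
/-- The matrix `Y⁻¹ ⊗ Y`. If `Y` is a fundamental matrix, it is the universal constant matrix
comparing the two copies `Y ⊗ 1` and `1 ⊗ Y` of `Y`. -/
noncomputable def torsorMatrix (Y : GL n L) : GL n (L ⊗[K] L) :=
  (Matrix.GeneralLinearGroup.map Algebra.TensorProduct.includeLeftRingHom Y)⁻¹ *
    Matrix.GeneralLinearGroup.map
      (Algebra.TensorProduct.includeRight : L →ₐ[K] L ⊗[K] L).toRingHom Y

theorem one_tmul_apply_eq_sum_smul_torsorMatrix (Y : GL n L) (p q : n) :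
    1 ⊗ₜ[K] Y p q = ∑ l, Y p l • torsorMatrix K Y l q := by
  have h : Matrix.GeneralLinearGroup.map Algebra.TensorProduct.includeLeftRingHom Y *
      torsorMatrix K Y = Matrix.GeneralLinearGroup.map
        (Algebra.TensorProduct.includeRight : L →ₐ[K] L ⊗[K] L).toRingHom Y :=
    mul_inv_cancel_left _ _
  have hpq := congrArg (fun U : GL n (L ⊗[K] L) => (U : Matrix n n (L ⊗[K] L)) p q) h
  simpa [Matrix.mul_apply, Algebra.smul_def] using hpq.symm

theorem one_tmul_mem_adjoin_torsorMatrix (Y : GL n L) {r : L}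
    (hr : r ∈ Algebra.adjoin K (matrixEntries (Y : Matrix n n L))) :
    1 ⊗ₜ[K] r ∈ Algebra.adjoin L (matrixEntries (torsorMatrix K Y : Matrix n n (L ⊗[K] L))) := by
  let S := Algebra.adjoin L (matrixEntries (torsorMatrix K Y : Matrix n n (L ⊗[K] L)))
  suffices Algebra.adjoin K (matrixEntries (Y : Matrix n n L)) ≤
    (S.restrictScalars K).comap Algebra.TensorProduct.includeRight from this hr
  refine Algebra.adjoin_le ?_
  rintro _ ⟨p, q, rfl⟩
  change 1 ⊗ₜ Y p q ∈ S
  rw [one_tmul_apply_eq_sum_smul_torsorMatrix]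
  exact sum_mem fun l _ => S.smul_mem (Algebra.subset_adjoin ⟨l, q, rfl⟩) _

theorem tensorDerivation_torsorMatrix {δK : Derivation k K K} {δ : Derivation k L L}
    (hcompat : ∀ x, δ (algebraMap K L x) = algebraMap K L (δK x)) {Y : GL n L} {A : Matrix n n K}
    (hY : matrixLogDeriv δ Y = A.map (algebraMap K L)) :
    (torsorMatrix K Y : Matrix n n (L ⊗[K] L)).map (tensorDerivation hcompat hcompat) = 0 := by
  rw [torsorMatrix, ← matrixLogDeriv_eq_matrixLogDeriv_iff,
    matrixLogDeriv_map (D := δ) (tensorDerivation_one_tmul hcompat hcompat),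
    matrixLogDeriv_map (D := δ) (tensorDerivation_tmul_one hcompat hcompat), hY]
  ext p q
  exact (Algebra.TensorProduct.includeRight : L →ₐ[K] L ⊗[K] L).commutes _

end Torsor

section TorsorSpecialization

variable {k K L n : Type*} [Field k] [Field K] [Field L] [Algebra k K] [Algebra K L] [Algebra k L]
  [IsScalarTower k K L] [Fintype n] [DecidableEq n]

theorem exists_matrix_algHom_of_not_isNilpotent [IsAlgClosed k] {δK : Derivation k K K}
    {δ : Derivation k L L} (hcompat : ∀ x, δ (algebraMap K L x) = algebraMap K L (δK x))
    (hδ : ∀ a, δ a = 0 → a ∈ (algebraMap k L).range) {Y : GL n L} {A : Matrix n n K}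
    (hY : matrixLogDeriv δ Y = A.map (algebraMap K L))
    {t : Algebra.adjoin L (matrixEntries (torsorMatrix K Y : Matrix n n (L ⊗[K] L)))}
    (ht : ¬ IsNilpotent t) :
    ∃ (C : GL n k) (θ : Algebra.adjoin L
        (matrixEntries (torsorMatrix K Y : Matrix n n (L ⊗[K] L))) →ₐ[L] L),
      θ t ≠ 0 ∧ ∀ p q, θ ⟨torsorMatrix K Y p q, Algebra.subset_adjoin ⟨p, q, rfl⟩⟩ =
        algebraMap k L (C p q) := by
  let Z := torsorMatrix K Y
  let S := Algebra.adjoin L (matrixEntries (Z : Matrix n n (L ⊗[K] L)))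
  let Z' : Matrix n n S := Matrix.of fun p q => ⟨Z p q, Algebra.subset_adjoin ⟨p, q, rfl⟩⟩
  have hZ' : ((Z'.det : S) : L ⊗[K] L) = (Z : Matrix n n (L ⊗[K] L)).det :=
    RingHom.map_det S.subtype Z'
  have ht' : ¬ IsNilpotent (t * Z'.det) := by
    rw [← IsNilpotent.map_iff (f := S.val) Subtype.val_injective, map_mul,
      S.val_apply Z'.det, hZ', IsUnit.isNilpotent_mul_unit_of_commute_iff
        (Matrix.isUnits_det_units Z) (Commute.all _ _),
      IsNilpotent.map_iff (f := S.val) Subtype.val_injective]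
    exact ht
  obtain ⟨θ, hθt, hθZ⟩ := exists_algHom_adjoin_constants_ne_zero hδ
    (tensorDerivation_tmul_one hcompat hcompat) (finite_matrixEntries _)
    (by
      rintro _ ⟨p, q, rfl⟩
      exact congrFun₂ (tensorDerivation_torsorMatrix hcompat hY) p q) ht'
  rw [map_mul, mul_ne_zero_iff] at hθt
  choose C hC using fun p q => hθZ ⟨Z p q, p, q, rfl⟩
  have hCdet : algebraMap k L (Matrix.of C).det = θ Z'.det := by
    rw [RingHom.map_det, AlgHom.map_det]
    congr 1
    ext p q
    exact hC p q
  refine ⟨Matrix.GeneralLinearGroup.mkOfDetNeZero (Matrix.of C) ?_, θ, hθt.1,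
    fun p q => (hC p q).symm⟩
  rintro h
  exact hθt.2 (by rw [← hCdet, h, map_zero])

/-- Specialize `1 ⊗ b - a ⊗ c`, which is not nilpotent: up to the unit `1 ⊗ c` it is
`1 ⊗ a - a ⊗ 1`. -/
theorem exists_algHom_apply_ne_mul_apply [IsAlgClosed k] [PerfectField K] {δK : Derivation k K K}
    {δ : Derivation k L L} (hcompat : ∀ x, δ (algebraMap K L x) = algebraMap K L (δK x))
    (hδ : ∀ a, δ a = 0 → a ∈ (algebraMap k L).range) {Y : GL n L} {A : Matrix n n K}
    (hY : matrixLogDeriv δ Y = A.map (algebraMap K L)) {a : L} (ha : a ∉ (algebraMap K L).range)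
    {b c : Algebra.adjoin K (matrixEntries (Y : Matrix n n L))} (hc : (c : L) ≠ 0)
    (hb : (b : L) = a * c) :
    ∃ (C : GL n k) (φ : Algebra.adjoin K (matrixEntries (Y : Matrix n n L)) →ₐ[K] L),
      φ b ≠ a * φ c ∧ ∀ p q, φ ⟨Y p q, Algebra.subset_adjoin ⟨p, q, rfl⟩⟩ =
        ((Y : Matrix n n L) * (C : Matrix n n k).map (algebraMap k L)) p q := by
  let S := Algebra.adjoin L (matrixEntries (torsorMatrix K Y : Matrix n n (L ⊗[K] L)))
  let ρ : Algebra.adjoin K (matrixEntries (Y : Matrix n n L)) →ₐ[K] S :=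
    AlgHom.codRestrict (Algebra.TensorProduct.includeRight.comp (Subalgebra.val _))
      (S.restrictScalars K) fun r => one_tmul_mem_adjoin_torsorMatrix Y r.2
  let t : S := ρ b - a • ρ c
  have ht_eq : (t : L ⊗[K] L) = -(a ⊗ₜ 1 - 1 ⊗ₜ a) * (1 ⊗ₜ (c : L)) := by
    change 1 ⊗ₜ (b : L) - a • (1 ⊗ₜ (c : L)) = _
    simp [hb, sub_mul, TensorProduct.smul_tmul']
  have hc_unit : IsUnit ((1 : L) ⊗ₜ[K] (c : L)) :=
    hc.isUnit.map (Algebra.TensorProduct.includeRight : L →ₐ[K] L ⊗[K] L)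
  have ht : ¬ IsNilpotent t := by
    rw [← IsNilpotent.map_iff (f := S.val) Subtype.val_injective, S.val_apply, ht_eq,
      hc_unit.isNilpotent_mul_unit_of_commute_iff (Commute.all _ _), isNilpotent_neg_iff]
    exact not_isNilpotent_tmul_one_sub_one_tmul ha
  obtain ⟨C, θ, hθt, hθZ⟩ := exists_matrix_algHom_of_not_isNilpotent hcompat hδ hY ht
  refine ⟨C, (θ.restrictScalars K).comp ρ, ?_, fun p q => ?_⟩
  · rwa [map_sub, map_smul, smul_eq_mul, sub_ne_zero] at hθt
  · have hρ : ρ ⟨Y p q, Algebra.subset_adjoin ⟨p, q, rfl⟩⟩ = ∑ l, Y p l •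
        (⟨torsorMatrix K Y l q, Algebra.subset_adjoin ⟨l, q, rfl⟩⟩ : S) :=
      Subtype.ext ((one_tmul_apply_eq_sum_smul_torsorMatrix Y p q).trans (by simp))
    change θ (ρ _) = _
    simp only [hρ, map_sum, map_smul, hθZ, Matrix.mul_apply, Matrix.map_apply, smul_eq_mul]

end TorsorSpecialization

section Extension

theorem ringHom_injective_of_surjective {R : Type*} [CommRing R] [IsNoetherianRing R] {f : R →+* R}
    (hf : Function.Surjective f) : Function.Injective f := by
  have hmono : Monotone fun n => RingHom.ker (f ^ n) := monotone_nat_of_le_succ fun n x hx => by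
    rw [RingHom.mem_ker] at hx ⊢
    rw [pow_succ', RingHom.mul_def, RingHom.comp_apply, hx, map_zero]
  obtain ⟨n, hn⟩ := monotone_stabilizes_iff_noetherian.2 ‹_› ⟨_, hmono⟩
  have hsurj : Function.Surjective (f ^ n) := by
    rw [RingHom.coe_pow]
    exact hf.iterate n
  refine (injective_iff_map_eq_zero f).2 fun x hx => ?_
  obtain ⟨y, rfl⟩ := hsurj x
  have hy : y ∈ RingHom.ker (f ^ (n + 1)) := by
    rw [RingHom.mem_ker, pow_succ', RingHom.mul_def, RingHom.comp_apply, hx]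
  exact (hn (n + 1) n.le_succ).ge hy

variable {K L : Type*} [Field K] [Field L] [Algebra K L]

theorem exists_algEquiv_extending_of_range_eq {s : Set L} (hfin : s.Finite)
    (hs : IntermediateField.adjoin K s = ⊤) {φ : Algebra.adjoin K s →ₐ[K] L}
    (hφ : φ.range = Algebra.adjoin K s) :
    ∃ σ : L ≃ₐ[K] L, ∀ r : Algebra.adjoin K s, σ r = φ r := by
  have : IsFractionRing (Algebra.adjoin K s) L := IsFractionRing.of_field _ L fun z => by
    obtain ⟨r, hr, t, ht, h⟩ := IntermediateField.mem_adjoin_iff_div.1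
      (hs ▸ IntermediateField.mem_top : z ∈ IntermediateField.adjoin K s)
    exact ⟨⟨r, hr⟩, ⟨t, ht⟩, h⟩
  have : Algebra.FiniteType K (Algebra.adjoin K s) := Algebra.FiniteType.adjoin_of_finite hfin
  have : IsNoetherianRing (Algebra.adjoin K s) := Algebra.FiniteType.isNoetherianRing K _
  let φ' : Algebra.adjoin K s →ₐ[K] Algebra.adjoin K s :=
    φ.codRestrict _ fun r => hφ.le (φ.mem_range_self r)
  have hsurj : Function.Surjective φ' := fun r => by
    obtain ⟨x, hx⟩ := hφ.ge r.2
    exact ⟨x, Subtype.ext hx⟩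
  let e : Algebra.adjoin K s ≃ₐ[K] Algebra.adjoin K s :=
    AlgEquiv.ofBijective φ' ⟨ringHom_injective_of_surjective (f := φ'.toRingHom) hsurj, hsurj⟩
  exact ⟨IsFractionRing.fieldEquivOfAlgEquiv K L L e,
    fun r => IsFractionRing.fieldEquivOfAlgEquiv_algebraMap K L L e r⟩

theorem algEquiv_derivation_comm_of_adjoin_eq_top {R : Type*} [CommRing R] [Algebra R L]
    {δK : K → K} {δ : Derivation R L L}
    (hcompat : ∀ x, δ (algebraMap K L x) = algebraMap K L (δK x)) {s : Set L}
    (hs : IntermediateField.adjoin K s = ⊤) {σ : L ≃ₐ[K] L} (hσ : ∀ x ∈ s, σ (δ x) = δ (σ x))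
    (a : L) : σ (δ a) = δ (σ a) := by
  have ha : a ∈ IntermediateField.adjoin K s := hs ▸ IntermediateField.mem_top
  induction ha using IntermediateField.adjoin_induction with
  | mem x hx => exact hσ x hx
  | algebraMap x => rw [hcompat, AlgEquiv.commutes, AlgEquiv.commutes, hcompat]
  | add x y _ _ hx hy => simp only [map_add, hx, hy]
  | inv x _ hx => simp only [δ.leibniz_inv, map_inv₀, smul_eq_mul, map_mul, map_neg, map_pow, hx]
  | mul x y _ _ hx hy => simp only [δ.leibniz, map_mul, map_add, hx, hy, smul_eq_mul]

end Extension

section RightMultiplication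

variable {k K L n : Type*} [CommRing k] [CommRing K] [CommRing L] [Algebra k K] [Algebra K L]
  [Algebra k L] [IsScalarTower k K L] [Fintype n]

theorem adjoin_matrixEntries_mul_map_le (M : Matrix n n L) (C : Matrix n n k) :
    Algebra.adjoin K (matrixEntries (M * C.map (algebraMap k L))) ≤
      Algebra.adjoin K (matrixEntries M) := by
  refine Algebra.adjoin_le ?_
  rintro _ ⟨p, q, rfl⟩
  rw [Matrix.mul_apply]
  refine sum_mem fun l _ => mul_mem (Algebra.subset_adjoin ⟨p, l, rfl⟩) ?_
  rw [Matrix.map_apply, IsScalarTower.algebraMap_apply k K L]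
  exact Subalgebra.algebraMap_mem _ _

theorem adjoin_matrixEntries_mul_map [DecidableEq n] (M : Matrix n n L) (C : GL n k) :
    Algebra.adjoin K (matrixEntries (M * (C : Matrix n n k).map (algebraMap k L))) =
      Algebra.adjoin K (matrixEntries M) := by
  refine (adjoin_matrixEntries_mul_map_le M _).antisymm ?_
  have h := adjoin_matrixEntries_mul_map_le (K := K) (M * (C : Matrix n n k).map (algebraMap k L))
    ((C⁻¹ : GL n k) : Matrix n n k)
  rwa [mul_assoc, ← Matrix.map_mul, Units.mul_inv, Matrix.map_one _ (map_zero _) (map_one _),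
    mul_one] at h

theorem range_eq_adjoin_of_apply_eq_mul_map [DecidableEq n] {M : Matrix n n L} {C : GL n k}
    {φ : Algebra.adjoin K (matrixEntries M) →ₐ[K] L}
    (hφ : ∀ p q, φ ⟨M p q, Algebra.subset_adjoin ⟨p, q, rfl⟩⟩ =
      (M * (C : Matrix n n k).map (algebraMap k L)) p q) :
    φ.range = Algebra.adjoin K (matrixEntries M) := by
  rw [← Algebra.map_top, ← Algebra.adjoin_adjoin_coe_preimage, AlgHom.map_adjoin]
  refine Eq.trans ?_ (adjoin_matrixEntries_mul_map M C)
  congr 1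
  ext x
  constructor
  · rintro ⟨⟨_, _⟩, ⟨p, q, rfl⟩, rfl⟩
    exact ⟨p, q, (hφ p q).symm⟩
  · rintro ⟨p, q, rfl⟩
    exact ⟨_, ⟨p, q, rfl⟩, hφ p q⟩

end RightMultiplication

section GaloisGroup

variable {R K L : Type*} [CommRing R] [CommRing K] [CommRing L] [Algebra R L] [Algebra K L]

variable (K) in
/-- The differential Galois group of a differential field extension: the group of all
automorphisms of `L` over `K` commuting with the derivation. -/
def differentialGaloisGroup (δ : Derivation R L L) : Subgroup (L ≃ₐ[K] L) where
  carrier := {σ | ∀ a, σ (δ a) = δ (σ a)}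
  mul_mem' {σ τ} hσ hτ a := by rw [AlgEquiv.mul_apply, hτ a, hσ, AlgEquiv.mul_apply]
  one_mem' _ := rfl
  inv_mem' {σ} hσ a := σ.injective (by
    rw [hσ, AlgEquiv.aut_inv, AlgEquiv.apply_symm_apply, AlgEquiv.apply_symm_apply])

theorem apply_mem_span_matrixEntries {n : Type*} [Fintype n] [DecidableEq n] [Algebra R K]
    [IsScalarTower R K L] {δ : Derivation R L L} (hδ : ∀ a, δ a = 0 → a ∈ (algebraMap R L).range)
    {Y : GL n L} {A : Matrix n n K}
    (hY : matrixLogDeriv δ Y = A.map (algebraMap K L)) {σ : L ≃ₐ[K] L}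
    (hσ : σ ∈ differentialGaloisGroup K δ) {v : L}
    (hv : v ∈ Submodule.span R (matrixEntries (Y : Matrix n n L))) :
    σ v ∈ Submodule.span R (matrixEntries (Y : Matrix n n L)) := by
  let σY : GL n L := Matrix.GeneralLinearGroup.map (σ : L →+* L) Y
  have hσY : matrixLogDeriv δ σY = matrixLogDeriv δ Y := by
    rw [matrixLogDeriv_map fun t => (hσ t).symm, hY]
    ext p q
    exact σ.commutes _
  obtain ⟨C, hC⟩ := (matrixLogDeriv_eq_matrixLogDeriv_iff_exists hδ).1 hσY
  suffices Submodule.span R (matrixEntries (Y : Matrix n n L)) ≤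
    (Submodule.span R (matrixEntries (Y : Matrix n n L))).comap
      (σ.restrictScalars R).toLinearMap from this hv
  refine Submodule.span_le.2 ?_
  rintro _ ⟨p, q, rfl⟩
  refine (congrFun₂ hC p q ▸ ?_ : σY p q ∈ Submodule.span R (matrixEntries (Y : Matrix n n L)))
  rw [Matrix.mul_apply]
  refine sum_mem fun l _ => ?_
  rw [Matrix.map_apply, ← Algebra.commutes, ← Algebra.smul_def]
  exact Submodule.smul_mem _ _ (Submodule.subset_span ⟨p, l, rfl⟩)

end GaloisGroup

section FixedField

variable {k K L n : Type*} [Field k] [Field K] [Field L] [Algebra K L] [Algebra k L] [Fintype n]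
  [DecidableEq n]

theorem mem_differentialGaloisGroup_of_map_eq_mul_map {δ : Derivation k L L} {δK : K → K}
    (hcompat : ∀ x, δ (algebraMap K L x) = algebraMap K L (δK x))
    {Y : GL n L} {A : Matrix n n K} (hY : matrixLogDeriv δ Y = A.map (algebraMap K L))
    (hgen : IntermediateField.adjoin K (matrixEntries (Y : Matrix n n L)) = ⊤)
    {σ : L ≃ₐ[K] L} {C : Matrix n n k}
    (hσ : (Y : Matrix n n L).map σ = (Y : Matrix n n L) * C.map (algebraMap k L)) :
    σ ∈ differentialGaloisGroup K δ := by
  refine algEquiv_derivation_comm_of_adjoin_eq_top hcompat hgen ?_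
  have hδY : (Y : Matrix n n L).map δ = A.map (algebraMap K L) * (Y : Matrix n n L) :=
    matrixLogDeriv_eq_iff.1 hY
  have hδC : (C.map (algebraMap k L)).map δ = 0 := by
    ext p q
    exact δ.map_algebraMap _
  have hAσ : (A.map (algebraMap K L)).map σ = A.map (algebraMap K L) := by
    ext p q
    exact σ.commutes _
  have h : ((Y : Matrix n n L).map δ).map σ = ((Y : Matrix n n L).map σ).map δ := by
    calc ((Y : Matrix n n L).map δ).map σ
        = A.map (algebraMap K L) * ((Y : Matrix n n L) * C.map (algebraMap k L)) := by
          rw [hδY, Matrix.map_mul, hAσ, hσ]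
      _ = ((Y : Matrix n n L).map σ).map δ := by
          rw [hσ, matrix_map_derivation_mul, hδC, mul_zero, add_zero, hδY, mul_assoc]
  rintro _ ⟨p, q, rfl⟩
  exact congrFun₂ h p q

theorem mem_range_of_forall_differentialGaloisGroup_apply_eq [IsAlgClosed k] [PerfectField K]
    [Algebra k K] [IsScalarTower k K L] {δK : Derivation k K K} {δ : Derivation k L L}
    (hcompat : ∀ x, δ (algebraMap K L x) = algebraMap K L (δK x))
    (hδ : ∀ a, δ a = 0 → a ∈ (algebraMap k L).range) {Y : GL n L} {A : Matrix n n K}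
    (hY : matrixLogDeriv δ Y = A.map (algebraMap K L))
    (hgen : IntermediateField.adjoin K (matrixEntries (Y : Matrix n n L)) = ⊤) {a : L}
    (ha : ∀ σ ∈ differentialGaloisGroup K δ, σ a = a) : a ∈ (algebraMap K L).range := by
  by_contra ha_range
  obtain ⟨b, hb, c, hc, rfl⟩ := IntermediateField.mem_adjoin_iff_div.1
    (hgen ▸ IntermediateField.mem_top :
      a ∈ IntermediateField.adjoin K (matrixEntries (Y : Matrix n n L)))
  have hc0 : c ≠ 0 := by
    rintro rfl
    exact ha_range (by simp)
  obtain ⟨C, φ, hφbc, hφY⟩ := exists_algHom_apply_ne_mul_apply hcompat hδ hY ha_range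
    (b := ⟨b, hb⟩) (c := ⟨c, hc⟩) hc0 (div_mul_cancel₀ b hc0).symm
  obtain ⟨σ, hσ⟩ := exists_algEquiv_extending_of_range_eq (finite_matrixEntries _) hgen
    (range_eq_adjoin_of_apply_eq_mul_map hφY)
  have hσY : (Y : Matrix n n L).map σ =
      (Y : Matrix n n L) * (C : Matrix n n k).map (algebraMap k L) := by
    ext p q
    exact (hσ _).trans (hφY p q)
  have hσa := ha σ (mem_differentialGaloisGroup_of_map_eq_mul_map hcompat hY hgen hσY)
  refine hφbc ?_
  rw [← hσ, ← hσ, ← div_eq_iff ((map_ne_zero σ).2 hc0), ← map_div₀, hσa]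

end FixedField

section InvariantSubspace

variable {k K L : Type*} [Field k] [Field K] [Field L] [Algebra K L] [Algebra k L]
  {δ : Derivation k L L} {n : ℕ}

theorem exists_matrixLogDeriv_eq_map_of_fixed {n : Type*} [Fintype n] [DecidableEq n]
    (hδ : ∀ a, δ a = 0 → a ∈ (algebraMap k L).range) {W : GL n L}
    {G : Subgroup (L ≃ₐ[K] L)} (hfix : ∀ a, (∀ σ ∈ G, σ a = a) → a ∈ (algebraMap K L).range)
    (hG : G ≤ differentialGaloisGroup K δ)
    (hW : ∀ σ ∈ G, ∃ C : Matrix n n k,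
      (W : Matrix n n L).map σ = (W : Matrix n n L) * C.map (algebraMap k L)) :
    ∃ A : Matrix n n K, matrixLogDeriv δ W = A.map (algebraMap K L) := by
  suffices ∀ p q, matrixLogDeriv δ W p q ∈ (algebraMap K L).range by
    choose A hA using this
    exact ⟨Matrix.of A, Matrix.ext fun p q => (hA p q).symm⟩
  refine fun p q => hfix _ fun σ hσ => ?_
  let σW : GL n L := Matrix.GeneralLinearGroup.map (σ : L →+* L) W
  have hσW : matrixLogDeriv δ σW = matrixLogDeriv δ W :=
    (matrixLogDeriv_eq_matrixLogDeriv_iff_exists hδ).2 (hW σ hσ)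
  have hinv : (matrixLogDeriv δ W).map σ = matrixLogDeriv δ W :=
    (matrixLogDeriv_map (fun t => (hG hσ t).symm) W).symm.trans hσW
  exact congrFun₂ hinv p q

theorem wronskianMatrix_basis_map_eq_mul_map {V : Submodule k L} (b : Module.Basis (Fin n) k V)
    {σ : L ≃ₐ[K] L} (hσ : σ ∈ differentialGaloisGroup K δ) (hV : ∀ v ∈ V, σ v ∈ V) :
    ∃ C : Matrix (Fin n) (Fin n) k, (wronskianMatrix δ (Subtype.val ∘ b)).map σ =
      wronskianMatrix δ (Subtype.val ∘ b) * C.map (algebraMap k L) := by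
  let C : Matrix (Fin n) (Fin n) k := Matrix.of fun l j => b.repr ⟨σ (b j), hV _ (b j).2⟩ l
  have hC : σ ∘ Subtype.val ∘ b = fun j => ∑ l, C l j • (b l : L) := funext fun j => by
    have h := congrArg (Subtype.val : V → L) (b.sum_repr ⟨σ (b j), hV _ (b j).2⟩)
    rw [AddSubmonoidClass.coe_finsetSum] at h
    exact h.symm
  exact ⟨C, by rw [wronskianMatrix_map hσ, hC]; exact wronskianMatrix_sum_smul δ _ C⟩

theorem adjoin_wronskianMatrix_basis_eq_top [Algebra k K] [IsScalarTower k K L]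
    {V : Submodule k L} (b : Module.Basis (Fin n) k V)
    (hgen : IntermediateField.adjoin K (V : Set L) = ⊤) :
    IntermediateField.adjoin K (matrixEntries (wronskianMatrix δ (Subtype.val ∘ b))) = ⊤ := by
  set F := IntermediateField.adjoin K (matrixEntries (wronskianMatrix δ (Subtype.val ∘ b)))
  rw [← top_le_iff, ← hgen, IntermediateField.adjoin_le_iff]
  intro v hv
  have hv_sum : _ = v := congrArg (Subtype.val : V → L) (b.sum_repr ⟨v, hv⟩)
  rw [AddSubmonoidClass.coe_finsetSum] at hv_sum
  rw [← hv_sum]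
  refine sum_mem fun j _ => ?_
  have hbj : (b j : L) ∈ F := IntermediateField.subset_adjoin _ _ ⟨⟨0, j.pos⟩, j, rfl⟩
  rw [Submodule.coe_smul, Algebra.smul_def, IsScalarTower.algebraMap_apply k K L]
  exact mul_mem (F.algebraMap_mem _) hbj

theorem exists_fundamentalMatrix_of_stable_subspace [Algebra k K] [IsScalarTower k K L]
    (hδ : ∀ a, δ a = 0 → a ∈ (algebraMap k L).range) {V : Submodule k L} [FiniteDimensional k V]
    (hgen : IntermediateField.adjoin K (V : Set L) = ⊤) {G : Subgroup (L ≃ₐ[K] L)}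
    (hG : G ≤ differentialGaloisGroup K δ) (hV : ∀ σ ∈ G, ∀ v ∈ V, σ v ∈ V)
    (hfix : ∀ a, (∀ σ ∈ G, σ a = a) → a ∈ (algebraMap K L).range) :
    ∃ (n : ℕ) (A : Matrix (Fin n) (Fin n) K) (Y : GL (Fin n) L),
      matrixLogDeriv δ Y = A.map (algebraMap K L) ∧
      IntermediateField.adjoin K (matrixEntries (Y : Matrix (Fin n) (Fin n) L)) = ⊤ := by
  let b := Module.finBasis k V
  have hb : LinearIndependent k (Subtype.val ∘ b) :=
    b.linearIndependent.map' V.subtype V.ker_subtype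
  let W := Matrix.GeneralLinearGroup.mk'' (wronskianMatrix δ (Subtype.val ∘ b))
    (isUnit_det_wronskianMatrix hδ hb)
  obtain ⟨A, hA⟩ := exists_matrixLogDeriv_eq_map_of_fixed (W := W) hδ hfix hG fun σ hσ =>
    wronskianMatrix_basis_map_eq_mul_map b (hG hσ) (hV σ hσ)
  exact ⟨_, A, W, hA, adjoin_wronskianMatrix_basis_eq_top b hgen⟩

end InvariantSubspace

section ConstantLinear

variable {k T : Type*} [CommRing k] [CommRing T] [Algebra k T]

/-- A derivation vanishing on the image of `k`, regarded as a `k`-linear derivation. -/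
def constantLinearDerivation (D : Derivation ℤ T T) (hD : ∀ c : k, D (algebraMap k T c) = 0) :
    Derivation k T T :=
  Derivation.mk'
    { (D : T →ₗ[ℤ] T).toAddMonoidHom with
      map_smul' := fun c x => by
        change D (c • x) = c • D x
        rw [Algebra.smul_def, D.leibniz, hD, smul_zero, add_zero, smul_eq_mul, Algebra.smul_def] }
    D.leibniz

end ConstantLinear

/-- (Magid) Let `K` be an ordinary differential field of characteristic
zero with algebraically closed constant field `k`, and `L|K` a differential field
extension. Then `L|K` is Picard-Vessiot iff (1) `L` is generated as a field over `K` by a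
finite-dimensional `k`-subspace `V ⊆ L`, (2) there is a group `G` of differential
automorphisms of `L|K` with `G(V) ⊆ V` and `L^G = K`, and (3) `L^δ = k`. -/
theorem picardVessiot_iff_magid
    (K L : Type*) [Field K] [CharZero K] [Field L] [CharZero L] [Algebra K L]
    (δK : Derivation ℤ K K) (δL : Derivation ℤ L L)
    (hcompat : ∀ a, δL (algebraMap K L a) = algebraMap K L (δK a))
    (halgcl : IsAlgClosed ↥(constantSubfieldO δK)) :
    IsPicardVessiotO K L δK δL ↔
      (letI : Algebra ↥(constantSubfieldO δK) L :=
        ((algebraMap K L).comp (constantSubfieldO δK).subtype).toAlgebra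
      ∃ V : Submodule ↥(constantSubfieldO δK) L,
        -- (1) `V` is finite-dimensional over `k` and generates `L` as a field over `K`:
        FiniteDimensional ↥(constantSubfieldO δK) ↥V ∧
        IntermediateField.adjoin K (V : Set L) = ⊤ ∧
        -- (2) a group of differential automorphisms stabilizing `V` with fixed field `K`:
        ∃ G : Subgroup (L ≃ₐ[K] L),
          (∀ σ ∈ G, ∀ a : L, σ (δL a) = δL (σ a)) ∧
          (∀ σ ∈ G, ∀ v ∈ V, σ v ∈ V) ∧
          (∀ a : L, (∀ σ ∈ G, σ a = a) → a ∈ (algebraMap K L).range)) ∧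
      -- (3) no new constants:
      (∀ a : L, δL a = 0 → ∃ c : K, δK c = 0 ∧ algebraMap K L c = a) := by
  let dK : Derivation (constantSubfieldO δK) K K := constantLinearDerivation δK fun c => c.2
  let dL : Derivation (constantSubfieldO δK) L L := constantLinearDerivation δL fun c =>
    (hcompat c).trans ((congrArg (algebraMap K L) c.2).trans (map_zero _))
  have hd : ∀ x, dL (algebraMap K L x) = algebraMap K L (dK x) := hcompat
  have hconst (h : ∀ a, δL a = 0 → ∃ c, δK c = 0 ∧ algebraMap K L c = a) (a : L) (ha : dL a = 0) :
      a ∈ (algebraMap (constantSubfieldO δK) L).range :=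
    let ⟨c, hc, hca⟩ := h a ha
    ⟨⟨c, hc⟩, hca⟩
  constructor
  · rintro ⟨h, n, A, Y, hY, hgen⟩
    have hY' : matrixLogDeriv dL Y = A.map (algebraMap K L) := matrixLogDeriv_eq_iff.2 hY
    exact ⟨⟨Submodule.span _ (matrixEntries Y.val),
      FiniteDimensional.span_of_finite _ (finite_matrixEntries _),
      top_le_iff.1 (hgen.ge.trans (IntermediateField.adjoin.mono _ _ _ Submodule.subset_span)),
      differentialGaloisGroup K dL, fun σ hσ => hσ,
      fun σ hσ v => apply_mem_span_matrixEntries (hconst h) hY' hσ,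
      fun a => mem_range_of_forall_differentialGaloisGroup_apply_eq hd (hconst h) hY' hgen⟩, h⟩
  · rintro ⟨⟨V, hfin, hgen, G, hG, hV, hfix⟩, h⟩
    obtain ⟨n, A, Y, hY, hgenY⟩ :=
      exists_fundamentalMatrix_of_stable_subspace (δ := dL) (hconst h) hgen hG hV hfix
    exact ⟨h, n, A, Y, matrixLogDeriv_eq_iff.1 hY, hgenY⟩
end

section
/- Let K be an ordinary differential field of characteristic zero whose field of constants is algebraically closed, and let L|K be a finitely differentially generated differential field extension with L^δ = K^δ. Then L|K is a Picard-Vessiot extension if and only if there exists a differential K-subalgebra R of L (a K-subalgebra stable under δ) whose quotient field is L and such that R ⊗_K R is generated as a left R-module by its constants, i.e., R ⊗_K R = R·(R ⊗_K R)^δ (finite sums Σ rᵢcᵢ with rᵢ ∈ R ⊗ 1 and cᵢ ∈ (R ⊗_K R)^δ). -/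
open scoped TensorProduct

/-- `S·T`: the set of finite sums `Σ sᵢ tᵢ` with `sᵢ ∈ S`, `tᵢ ∈ T`. -/
def dotSet {R : Type*} [CommRing R] (S T : Set R) : Set R :=
  {x | ∃ (n : ℕ) (s t : Fin n → R), (∀ i, s i ∈ S) ∧ (∀ i, t i ∈ T) ∧ x = ∑ i, s i * t i}

/-- `L|K` is finitely differentially generated: `L` is generated as a field over `K` by
`{δⁿ(a) : a ∈ S, n ≥ 0}` for some finite `S ⊆ L`. -/
def FinitelyDeltaGeneratedO (K L : Type*) [Field K] [Field L] [Algebra K L]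
    (δL : Derivation ℤ L L) : Prop :=
  ∃ S : Finset L, IntermediateField.adjoin K
    {x : L | ∃ a ∈ S, ∃ n : ℕ, x = (⇑δL)^[n] a} = ⊤

/-- The image of `R ⊗_K R` inside `L ⊗_K L`, for a subalgebra `R` of `L`: the subring
generated by the elements `a ⊗ 1` and `1 ⊗ a` with `a ∈ R`. -/
noncomputable def tensorSubring (K L : Type*) [Field K] [Field L] [Algebra K L]
    (R : Subalgebra K L) : Subring (L ⊗[K] L) :=
  Subring.closure ({y : L ⊗[K] L | ∃ a ∈ R, y = a ⊗ₜ[K] (1 : L)} ∪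
    {y : L ⊗[K] L | ∃ a ∈ R, y = (1 : L) ⊗ₜ[K] a})

/-!
A fundamental matrix `Y` of `δ(y) = Ay` yields `R = K[Y, Y⁻¹]`. Both `Y ⊗ 1` and `1 ⊗ Y` are
fundamental matrices over `L ⊗_K L` of the same system, so `Z = (Y ⊗ 1)⁻¹ (1 ⊗ Y)` and `Z⁻¹` have
constant entries, and `1 ⊗ Y = (Y ⊗ 1) Z` puts `1 ⊗ R` into `R · (R ⊗_K R)^δ`.

Conversely, choose a finite `F ⊆ R` of numerators and denominators of differential generators of
`L`. The elements `1 ⊗ a` with `a ∈ F` lie in the `L`-span of finitely many constants. This span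
is `δ`-stable, so it contains `1 ⊗ V` for the `K`-span `V` of all derivatives of `F`, which is
therefore finite-dimensional. Write `δ(v) = Av` for a basis `v` of `V`. The coordinates of `1 ⊗ v`
with respect to linearly independent constants form a matrix `Q` with `δ(Q) = AQ` and independent
rows. An invertible square submatrix `Y` of `Q` is a fundamental matrix. As `Y⁻¹v` is constant, it
has entries in `K`, so `F ⊆ V ⊆ K[Y]`, and the differential field `K(Y)` is all of `L`.
-/

namespace PicardVessiot

section Matrices

variable {m n l T : Type*} [CommRing T]

theorem map_derivation_mul [Fintype n] (D : Derivation ℤ T T) (M : Matrix m n T)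
    (N : Matrix n l T) : (M * N).map D = M.map D * N + M * N.map D := by
  ext i j
  simp only [Matrix.map_apply, Matrix.mul_apply, Matrix.add_apply, map_sum, Derivation.leibniz,
    smul_eq_mul, ← Finset.sum_add_distrib]
  exact Finset.sum_congr rfl fun _ _ => by ring

theorem map_derivation_one [DecidableEq n] (D : Derivation ℤ T T) :
    (1 : Matrix n n T).map D = 0 := by
  ext i j
  rcases eq_or_ne i j with rfl | hij <;> simp [*]

/-- The set of entries of a matrix. -/
def entries {α : Type*} (M : Matrix m n α) : Set α := {x | ∃ p q, M p q = x}

variable [Fintype n] [DecidableEq n]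

/-- `X` is a fundamental solution matrix of the linear differential system `D(y) = By`. -/
def IsFundamentalMatrix (D : Derivation ℤ T T) (B : Matrix n n T) (X : GL n T) : Prop :=
  (X : Matrix n n T).map D = B * X

namespace IsFundamentalMatrix

variable {D : Derivation ℤ T T} {B : Matrix n n T} {X : GL n T}

theorem map_inv (hX : IsFundamentalMatrix D B X) :
    ((X⁻¹ : GL n T) : Matrix n n T).map D = -((X⁻¹ : GL n T) * B) := by
  have hXX : (X : Matrix n n T) * (X⁻¹ : GL n T) = 1 := X.mul_inv
  have hsum : ((X⁻¹ : GL n T) : Matrix n n T).map D * X + (X⁻¹ : GL n T) * (B * X) = 0 := by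
    rw [← hX, ← map_derivation_mul, X.inv_mul, map_derivation_one]
  have := congrArg (· * ((X⁻¹ : GL n T) : Matrix n n T)) hsum
  simp only [add_mul, mul_assoc, hXX, mul_one, zero_mul] at this
  exact eq_neg_of_add_eq_zero_left this

theorem map_inv_mul_eq_zero (hX : IsFundamentalMatrix D B X) {Z : Matrix n l T}
    (hZ : Z.map D = B * Z) : (((X⁻¹ : GL n T) : Matrix n n T) * Z).map D = 0 := by
  rw [map_derivation_mul, hX.map_inv, hZ, Matrix.neg_mul, Matrix.mul_assoc, neg_add_cancel]

protected theorem map {S : Type*} [CommRing S] {E : Derivation ℤ S S}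
    (hX : IsFundamentalMatrix D B X) (f : T →+* S) (hf : ∀ a, E (f a) = f (D a)) :
    IsFundamentalMatrix E (B.map f) (Matrix.GeneralLinearGroup.map f X) := by
  change ((X : Matrix n n T).map f).map E = B.map f * (X : Matrix n n T).map f
  rw [← Matrix.map_mul, ← hX]
  ext i j
  exact hf _

theorem apply_eq_sum (hX : IsFundamentalMatrix D B X) (i j : n) :
    D (X i j) = ∑ k, B i k * X k j :=
  congrFun₂ hX i j

theorem inv_apply_eq_sum (hX : IsFundamentalMatrix D B X) (i j : n) :
    D (X⁻¹ i j) = -∑ k, X⁻¹ i k * B k j :=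
  congrFun₂ hX.map_inv i j

/-- A solution is `X` times a constant vector, and the constants lie in `K`. -/
theorem mem_adjoin_entries {K : Type*} [CommRing K] [Algebra K T]
    (hX : IsFundamentalMatrix D B X) (hconst : ∀ a, D a = 0 → a ∈ Set.range (algebraMap K T))
    {v : n → T} (hv : ∀ j, D (v j) = ∑ k, B j k * v k) (j : n) :
    v j ∈ Algebra.adjoin K (entries (X : Matrix n n T)) := by
  let Z : Matrix n Unit T := Matrix.replicateCol Unit v
  let C : Matrix n Unit T := ((X⁻¹ : GL n T) : Matrix n n T) * Z
  have hC : C.map D = 0 := hX.map_inv_mul_eq_zero (by ext i; exact hv i)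
  have hZ : Z = (X : Matrix n n T) * C := by
    rw [← Matrix.mul_assoc, X.mul_inv, Matrix.one_mul]
  have hvj : v j = ∑ k, X j k * C k () := congrFun₂ hZ j ()
  rw [hvj]
  refine sum_mem fun k _ => mul_mem (Algebra.subset_adjoin ⟨j, k, rfl⟩) ?_
  obtain ⟨c, hc⟩ := hconst (C k ()) (congrFun₂ hC k ())
  exact hc ▸ Subalgebra.algebraMap_mem _ c

end IsFundamentalMatrix

theorem exists_isUnit_submatrix {F : Type*} [Field F] {Q : Matrix n m F}
    (hQ : LinearIndependent F Q.row) : ∃ f : n → m, IsUnit (Q.submatrix id f) := by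
  have hspan : Submodule.span F (Set.range Q.col) = ⊤ := by
    by_contra hne
    obtain ⟨φ, hφ, hle⟩ := Submodule.exists_le_ker_of_lt_top _ (lt_top_iff_ne_top.mpr hne)
    have hrel : ∑ i, φ (Pi.single i 1) • Q.row i = 0 := by
      ext k
      have hk : φ (Q.col k) = 0 := hle (Submodule.subset_span ⟨k, rfl⟩)
      rw [pi_eq_sum_univ' (Q.col k), map_sum] at hk
      simpa [mul_comm] using hk
    refine hφ (LinearMap.pi_ext' fun i => LinearMap.ext_ring ?_)
    simpa using Fintype.linearIndependent_iff.mp hQ _ hrel i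
  obtain ⟨κ, a, _, hspan', hli⟩ := exists_linearIndependent' F Q.col
  let b := Module.Basis.mk hli (hspan'.trans hspan).ge
  let e := b.indexEquiv (Pi.basisFun F n)
  refine ⟨a ∘ e.symm, Matrix.linearIndependent_cols_iff_isUnit.mp ?_⟩
  exact hli.comp e.symm e.symm.injective

end Matrices

section DifferentialModules

variable {R M : Type*} [CommRing R] [AddCommGroup M] [Module R M]

/-- The additive map `D` turns the `R`-module `M` into a differential module over the differential
ring `(R, δ)`. -/
def IsDerivationOver (δ : Derivation ℤ R R) (D : M →+ M) : Prop :=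
  ∀ (r : R) (x : M), D (r • x) = δ r • x + r • D x

namespace IsDerivationOver

variable {δ : Derivation ℤ R R} {D : M →+ M}

theorem map_mem_span (hD : IsDerivationOver δ D) {s : Set M}
    (hs : ∀ x ∈ s, D x ∈ Submodule.span R s) {x : M} (hx : x ∈ Submodule.span R s) :
    D x ∈ Submodule.span R s := by
  induction hx using Submodule.span_induction with
  | mem x hx => exact hs x hx
  | zero => simp
  | add x y _ _ hx hy => rw [map_add]; exact add_mem hx hy
  | smul r x hx hDx =>
    rw [hD]; exact add_mem (Submodule.smul_mem _ _ hx) (Submodule.smul_mem _ _ hDx)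

theorem map_linearCombination (hD : IsDerivationOver δ D) {ι : Type*} {c : ι → M}
    (hc : ∀ i, D (c i) = 0) (f : ι →₀ R) :
    D (Finsupp.linearCombination R c f) =
      Finsupp.linearCombination R c (f.mapRange δ (map_zero δ)) := by
  induction f using Finsupp.induction_linear with
  | zero => simp
  | add f g hf hg => rw [map_add, map_add, hf, hg, Finsupp.mapRange_add (map_add δ), map_add]
  | single i r => simp [hD r, hc]

/-- The coordinates of the `u j` with respect to independent constants form a matrix of solutions
with independent rows, of which we take a maximal minor. -/
theorem exists_isFundamentalMatrix {L M : Type*} [Field L] [AddCommGroup M] [Module L M]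
    {δ : Derivation ℤ L L} {D : M →+ M} (hD : IsDerivationOver δ D)
    {ι : Type*} [Fintype ι] [DecidableEq ι] {u : ι → M} (hu : LinearIndependent L u)
    {B : Matrix ι ι L} (hDu : ∀ j, D (u j) = ∑ k, B j k • u k)
    (hconst : ∀ j, u j ∈ Submodule.span L {c | D c = 0}) :
    ∃ Y : GL ι L, IsFundamentalMatrix δ B Y := by
  obtain ⟨b, hb, hspan, hli⟩ := exists_linearIndependent L {c : M | D c = 0}
  simp only [← hspan, Finsupp.mem_span_iff_linearCombination] at hconst
  choose q hq using hconst
  have hδq : ∀ j, (q j).mapRange δ (map_zero δ) = ∑ k, B j k • q k := by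
    refine fun j => hli ?_
    rw [← hD.map_linearCombination fun i => hb i.2, hq, hDu, map_sum]
    simp only [map_smul, hq]
  let Q : Matrix ι b L := Matrix.of fun j => q j
  have hrow : LinearIndependent L Q.row := by
    have hq' : LinearIndependent L q :=
      LinearIndependent.of_comp (Finsupp.linearCombination L (Subtype.val : b → M))
        (by convert hu using 1; exact funext hq)
    exact hq'.map' (Finsupp.lcoeFun) (LinearMap.ker_eq_bot.mpr DFunLike.coe_injective)
  obtain ⟨f, hf⟩ := exists_isUnit_submatrix hrow
  refine ⟨hf.unit, ?_⟩
  ext j k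
  simpa [Q, Matrix.mul_apply] using DFunLike.congr_fun (hδq j) (f k)

end IsDerivationOver

theorem finite_of_one_tmul_mem_span {K S M : Type*} [Field K] [CommRing S] [Nontrivial S]
    [Algebra K S] [AddCommGroup M] [Module K M] (V : Submodule K M) (t : Finset (S ⊗[K] M))
    (hV : ∀ v ∈ V, (1 : S) ⊗ₜ[K] v ∈ Submodule.span S (t : Set (S ⊗[K] M))) :
    Module.Finite K V := by
  let b := Module.Basis.ofVectorSpace K V
  have hb : LinearIndependent K fun i => (b i : M) :=
    b.linearIndependent.map' V.subtype V.ker_subtype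
  have := (Module.Flat.linearIndependent_one_tmul (S := S) hb).finite_of_le_span_finite _ _
    (by rintro _ ⟨i, rfl⟩; exact hV _ (b i).2)
  exact Module.Finite.of_basis b

end DifferentialModules

section DifferentialAlgebras

variable {K L : Type*} [CommRing K] [CommRing L] [Algebra K L]
  {δK : Derivation ℤ K K} {δL : Derivation ℤ L L} {δT : Derivation ℤ (L ⊗[K] L) (L ⊗[K] L)}

/-- The subring of constants of an ordinary differential ring. -/
def constantsSubring {T : Type*} [CommRing T] (D : Derivation ℤ T T) : Subring T where
  carrier := {a | D a = 0}
  mul_mem' {a b} (ha : D a = 0) (hb : D b = 0) := by simp [ha, hb]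
  one_mem' := D.map_one_eq_zero
  add_mem' {a b} (ha : D a = 0) (hb : D b = 0) := by simp [ha, hb]
  zero_mem' := map_zero D
  neg_mem' {a} (ha : D a = 0) := by simp [ha]

theorem isDerivationOver_of_compat
    (hcompat : ∀ a, δL (algebraMap K L a) = algebraMap K L (δK a)) :
    IsDerivationOver δK (δL : L →+ L) := by
  intro a x
  simp only [Algebra.smul_def a, Algebra.smul_def (δK a), AddMonoidHom.coe_coe, Derivation.leibniz,
    hcompat, smul_eq_mul]
  ring

theorem isDerivationOver_tensor
    (hδT : ∀ a b : L, δT (a ⊗ₜ[K] b) = δL a ⊗ₜ[K] b + a ⊗ₜ[K] δL b) :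
    IsDerivationOver δL (δT : L ⊗[K] L →+ L ⊗[K] L) := by
  intro a x
  have hsmul (b : L) (y : L ⊗[K] L) : b • y = (b ⊗ₜ[K] (1 : L)) * y := Algebra.smul_def b y
  simp only [hsmul, AddMonoidHom.coe_coe, Derivation.leibniz, hδT, Derivation.map_one_eq_zero,
    TensorProduct.tmul_zero, add_zero, smul_eq_mul]
  ring

theorem mem_dotSet_iff_mem_span (R : Subalgebra K L) (C : Set (L ⊗[K] L)) (x : L ⊗[K] L) :
    x ∈ dotSet {y : L ⊗[K] L | ∃ a ∈ R, y = a ⊗ₜ[K] (1 : L)} C ↔ x ∈ Submodule.span R C := by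
  have hsmul (r : R) (y : L ⊗[K] L) : r • y = ((r : L) ⊗ₜ[K] (1 : L)) * y :=
    Algebra.smul_def r y
  rw [Submodule.mem_span_set']
  constructor
  · rintro ⟨n, s, t, hs, ht, rfl⟩
    choose r hr hrs using hs
    exact ⟨n, fun i => ⟨r i, hr i⟩, fun i => ⟨t i, ht i⟩, by simp only [hsmul, hrs]⟩
  · rintro ⟨n, r, t, rfl⟩
    exact ⟨n, fun i => (r i : L) ⊗ₜ[K] 1, fun i => t i, fun i => ⟨r i, (r i).2, rfl⟩,
      fun i => (t i).2, by simp only [hsmul]⟩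

theorem derivation_mem_adjoin (hcompat : ∀ a, δL (algebraMap K L a) = algebraMap K L (δK a))
    {s : Set L} (hs : ∀ x ∈ s, δL x ∈ Algebra.adjoin K s) {x : L} (hx : x ∈ Algebra.adjoin K s) :
    δL x ∈ Algebra.adjoin K s := by
  induction hx using Algebra.adjoin_induction with
  | mem x hx => exact hs x hx
  | algebraMap r => rw [hcompat]; exact Subalgebra.algebraMap_mem _ _
  | add x y _ _ hx hy => rw [map_add]; exact add_mem hx hy
  | mul x y hx hy hδx hδy =>
    rw [Derivation.leibniz]; exact add_mem (mul_mem hx hδy) (mul_mem hy hδx)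

variable {ι : Type*} [Fintype ι] [DecidableEq ι]

/-- The Picard-Vessiot ring `K[Y, Y⁻¹]` generated by a fundamental matrix. -/
def pvRing (K : Type*) [CommRing K] [Algebra K L] (Y : GL ι L) : Subalgebra K L :=
  Algebra.adjoin K (entries (Y : Matrix ι ι L) ∪ entries ((Y⁻¹ : GL ι L) : Matrix ι ι L))

theorem apply_mem_pvRing (Y : GL ι L) (i j : ι) : Y i j ∈ pvRing K Y :=
  Algebra.subset_adjoin (Or.inl ⟨i, j, rfl⟩)

theorem inv_apply_mem_pvRing (Y : GL ι L) (i j : ι) : Y⁻¹ i j ∈ pvRing K Y :=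
  Algebra.subset_adjoin (Or.inr ⟨i, j, rfl⟩)

variable {A : Matrix ι ι K} {Y : GL ι L}

theorem derivation_mem_pvRing (hcompat : ∀ a, δL (algebraMap K L a) = algebraMap K L (δK a))
    (hY : IsFundamentalMatrix δL (A.map (algebraMap K L)) Y) {x : L} (hx : x ∈ pvRing K Y) :
    δL x ∈ pvRing K Y := by
  refine derivation_mem_adjoin hcompat ?_ hx
  rintro _ (⟨i, j, rfl⟩ | ⟨i, j, rfl⟩)
  · rw [hY.apply_eq_sum]
    exact sum_mem fun k _ => mul_mem (Subalgebra.algebraMap_mem _ _) (apply_mem_pvRing Y k j)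
  · rw [hY.inv_apply_eq_sum]
    exact neg_mem (sum_mem fun k _ =>
      mul_mem (inv_apply_mem_pvRing Y i k) (Subalgebra.algebraMap_mem _ _))

/-- The matrix `Y ⊗ 1`. -/
noncomputable def tmulOne (K : Type*) [CommRing K] [Algebra K L] (Y : GL ι L) : GL ι (L ⊗[K] L) :=
  Matrix.GeneralLinearGroup.map Algebra.TensorProduct.includeLeftRingHom Y

/-- The matrix `1 ⊗ Y`. -/
noncomputable def oneTmul (K : Type*) [CommRing K] [Algebra K L] (Y : GL ι L) : GL ι (L ⊗[K] L) :=
  Matrix.GeneralLinearGroup.map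
    (Algebra.TensorProduct.includeRight : L →ₐ[K] L ⊗[K] L).toRingHom Y

theorem isFundamentalMatrix_tmulOne
    (hδT : ∀ a b : L, δT (a ⊗ₜ[K] b) = δL a ⊗ₜ[K] b + a ⊗ₜ[K] δL b)
    (hY : IsFundamentalMatrix δL (A.map (algebraMap K L)) Y) :
    IsFundamentalMatrix δT (A.map (algebraMap K (L ⊗[K] L))) (tmulOne K Y) := by
  convert! hY.map (E := δT) Algebra.TensorProduct.includeLeftRingHom fun a => ?_ using 1
  exact (hδT a 1).trans (by simp)

theorem isFundamentalMatrix_oneTmul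
    (hδT : ∀ a b : L, δT (a ⊗ₜ[K] b) = δL a ⊗ₜ[K] b + a ⊗ₜ[K] δL b)
    (hY : IsFundamentalMatrix δL (A.map (algebraMap K L)) Y) :
    IsFundamentalMatrix δT (A.map (algebraMap K (L ⊗[K] L))) (oneTmul K Y) := by
  convert! hY.map (E := δT)
    (Algebra.TensorProduct.includeRight : L →ₐ[K] L ⊗[K] L).toRingHom fun a => ?_ using 1
  · ext i j
    exact (Algebra.TensorProduct.includeRight.commutes (A i j)).symm
  · exact (hδT 1 a).trans (by simp)

end DifferentialAlgebras

section DifferentialFields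

variable {K L : Type*} [Field K] [Field L] [Algebra K L]
  {δK : Derivation ℤ K K} {δL : Derivation ℤ L L}

theorem derivation_mem_intermediateField_adjoin
    (hcompat : ∀ a, δL (algebraMap K L a) = algebraMap K L (δK a)) {s : Set L}
    (hs : ∀ x ∈ s, δL x ∈ Algebra.adjoin K s) {x : L} (hx : x ∈ IntermediateField.adjoin K s) :
    δL x ∈ IntermediateField.adjoin K s := by
  have hle := IntermediateField.algebra_adjoin_le_adjoin K s
  obtain ⟨a, ha, b, hb, rfl⟩ := IntermediateField.mem_adjoin_iff_div.mp hx
  rw [Derivation.leibniz_div]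
  have hδa : δL a ∈ IntermediateField.adjoin K s := hle (derivation_mem_adjoin hcompat hs ha)
  have hδb : δL b ∈ IntermediateField.adjoin K s := hle (derivation_mem_adjoin hcompat hs hb)
  have haE : a ∈ IntermediateField.adjoin K s := hle ha
  have hbE : b ∈ IntermediateField.adjoin K s := hle hb
  exact mul_mem (pow_mem (inv_mem hbE) 2) (sub_mem (mul_mem hbE hδa) (mul_mem haE hδb))

theorem IsFundamentalMatrix.derivation_mem_intermediateField_adjoin_entries
    (hcompat : ∀ a, δL (algebraMap K L a) = algebraMap K L (δK a))
    {ι : Type*} [Fintype ι] [DecidableEq ι] {A : Matrix ι ι K} {Y : GL ι L}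
    (hY : IsFundamentalMatrix δL (A.map (algebraMap K L)) Y) {x : L}
    (hx : x ∈ IntermediateField.adjoin K (entries (Y : Matrix ι ι L))) :
    δL x ∈ IntermediateField.adjoin K (entries (Y : Matrix ι ι L)) := by
  refine derivation_mem_intermediateField_adjoin hcompat ?_ hx
  rintro _ ⟨i, j, rfl⟩
  rw [hY.apply_eq_sum]
  exact sum_mem fun k _ =>
    mul_mem (Subalgebra.algebraMap_mem _ _) (Algebra.subset_adjoin ⟨k, j, rfl⟩)

theorem exists_mul_eq_of_adjoin_eq_top {s : Set L} (hs : IntermediateField.adjoin K s = ⊤)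
    {R : Subalgebra K L} (hR : s ⊆ R) (x : L) : ∃ p ∈ R, ∃ q ∈ R, q ≠ 0 ∧ x * q = p := by
  have hle : Algebra.adjoin K s ≤ R := Algebra.adjoin_le hR
  have hx : x ∈ IntermediateField.adjoin K s := hs ▸ IntermediateField.mem_top
  obtain ⟨p, hp, q, hq, rfl⟩ := IntermediateField.mem_adjoin_iff_div.mp hx
  rcases eq_or_ne q 0 with rfl | hq0
  · exact ⟨0, zero_mem _, 1, one_mem _, one_ne_zero, by simp⟩
  · exact ⟨p, hle hp, q, hle hq, hq0, div_mul_cancel₀ p hq0⟩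

theorem exists_finset_subset_forall_stable_eq_top (hfg : FinitelyDeltaGeneratedO K L δL)
    {R : Subalgebra K L} (hR : ∀ x : L, ∃ p ∈ R, ∃ q ∈ R, q ≠ 0 ∧ x * q = p) :
    ∃ F : Finset L, (F : Set L) ⊆ R ∧
      ∀ E : IntermediateField K L, (∀ x ∈ E, δL x ∈ E) → (F : Set L) ⊆ E → E = ⊤ := by
  classical
  obtain ⟨S, hS⟩ := hfg
  choose p hp q hq hq0 hpq using hR
  refine ⟨S.image p ∪ S.image q, ?_, fun E hE hFE => ?_⟩
  · simp [Set.subset_def, or_imp, forall_and, hp, hq]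
  · rw [eq_top_iff, ← hS, IntermediateField.adjoin_le_iff]
    rintro _ ⟨a, ha, k, rfl⟩
    have haE : a ∈ E := by
      rw [eq_div_of_mul_eq (hq0 a) (hpq a)]
      exact div_mem (hFE (by simpa using Or.inl ⟨a, ha, rfl⟩))
        (hFE (by simpa using Or.inr ⟨a, ha, rfl⟩))
    exact (show Set.MapsTo δL E E from hE).iterate k haE

end DifferentialFields

section PicardVessiotRing

variable {K L : Type*} [Field K] [Field L] [Algebra K L]
  {δL : Derivation ℤ L L} {δT : Derivation ℤ (L ⊗[K] L) (L ⊗[K] L)}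

theorem tensorSubring_adjoin_le {s : Set L}
    {P : Subalgebra (Algebra.adjoin K s) (L ⊗[K] L)} (hP : ∀ g ∈ s, (1 : L) ⊗ₜ[K] g ∈ P) :
    tensorSubring K L (Algebra.adjoin K s) ≤ P.toSubring := by
  refine Subring.closure_le.mpr ?_
  rintro _ (⟨a, ha, rfl⟩ | ⟨a, ha, rfl⟩)
  · exact P.algebraMap_mem ⟨a, ha⟩
  · have hle : Algebra.adjoin K s ≤
        (P.restrictScalars K).comap Algebra.TensorProduct.includeRight :=
      Algebra.adjoin_le hP
    exact hle ha

variable {ι : Type*} [Fintype ι] [DecidableEq ι] {A : Matrix ι ι K} {Y : GL ι L}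

theorem tmulOne_apply_mem {R : Subalgebra K L} {i j : ι} (h : Y i j ∈ R) :
    tmulOne K Y i j ∈ tensorSubring K L R :=
  Subring.subset_closure (Or.inl ⟨_, h, rfl⟩)

theorem oneTmul_apply_mem {R : Subalgebra K L} {i j : ι} (h : Y i j ∈ R) :
    oneTmul K Y i j ∈ tensorSubring K L R :=
  Subring.subset_closure (Or.inr ⟨_, h, rfl⟩)

theorem inv_tmulOne_mul_oneTmul_apply_mem
    (hδT : ∀ a b : L, δT (a ⊗ₜ[K] b) = δL a ⊗ₜ[K] b + a ⊗ₜ[K] δL b)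
    (hY : IsFundamentalMatrix δL (A.map (algebraMap K L)) Y) (i j : ι) :
    ((tmulOne K Y)⁻¹ * oneTmul K Y) i j ∈
      tensorSubring K L (pvRing K Y) ⊓ constantsSubring δT := by
  refine ⟨?_, congrFun₂ ((isFundamentalMatrix_tmulOne hδT hY).map_inv_mul_eq_zero
    (isFundamentalMatrix_oneTmul hδT hY)) i j⟩
  exact sum_mem fun k _ => mul_mem (tmulOne_apply_mem (inv_apply_mem_pvRing Y i k))
    (oneTmul_apply_mem (apply_mem_pvRing Y k j))

theorem inv_oneTmul_mul_tmulOne_apply_mem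
    (hδT : ∀ a b : L, δT (a ⊗ₜ[K] b) = δL a ⊗ₜ[K] b + a ⊗ₜ[K] δL b)
    (hY : IsFundamentalMatrix δL (A.map (algebraMap K L)) Y) (i j : ι) :
    ((oneTmul K Y)⁻¹ * tmulOne K Y) i j ∈
      tensorSubring K L (pvRing K Y) ⊓ constantsSubring δT := by
  refine ⟨?_, congrFun₂ ((isFundamentalMatrix_oneTmul hδT hY).map_inv_mul_eq_zero
    (isFundamentalMatrix_tmulOne hδT hY)) i j⟩
  exact sum_mem fun k _ => mul_mem (oneTmul_apply_mem (inv_apply_mem_pvRing Y i k))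
    (tmulOne_apply_mem (apply_mem_pvRing Y k j))

theorem mem_span_of_mem_tensorSubring_pvRing
    (hδT : ∀ a b : L, δT (a ⊗ₜ[K] b) = δL a ⊗ₜ[K] b + a ⊗ₜ[K] δL b)
    (hY : IsFundamentalMatrix δL (A.map (algebraMap K L)) Y) {x : L ⊗[K] L}
    (hx : x ∈ tensorSubring K L (pvRing K Y)) :
    x ∈ Submodule.span (pvRing K Y) {c | c ∈ tensorSubring K L (pvRing K Y) ∧ δT c = 0} := by
  let U : Subring (L ⊗[K] L) := tensorSubring K L (pvRing K Y) ⊓ constantsSubring δT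
  let P : Subalgebra (pvRing K Y) (L ⊗[K] L) := Algebra.adjoin (pvRing K Y) U
  have hP : (P : Set (L ⊗[K] L)) = Submodule.span (pvRing K Y) (U : Set (L ⊗[K] L)) := by
    rw [← Subalgebra.coe_toSubmodule, Algebra.adjoin_eq_span]
    exact congrArg _ (congrArg _ (congrArg _ U.toSubmonoid.closure_eq))
  suffices x ∈ P from hP.le this
  refine tensorSubring_adjoin_le (P := P) ?_ hx
  rintro _ (⟨i, j, rfl⟩ | ⟨i, j, rfl⟩)
  · have hmul : oneTmul K Y = tmulOne K Y * ((tmulOne K Y)⁻¹ * oneTmul K Y) := by group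
    change oneTmul K Y i j ∈ P
    rw [hmul]
    exact sum_mem fun k _ => mul_mem (P.algebraMap_mem ⟨_, apply_mem_pvRing Y i k⟩)
      (Algebra.subset_adjoin (inv_tmulOne_mul_oneTmul_apply_mem hδT hY k j))
  · have hmul : (oneTmul K Y)⁻¹ = (oneTmul K Y)⁻¹ * tmulOne K Y * (tmulOne K Y)⁻¹ := by group
    change (oneTmul K Y)⁻¹ i j ∈ P
    rw [hmul]
    exact sum_mem fun k _ =>
      mul_mem (Algebra.subset_adjoin (inv_oneTmul_mul_tmulOne_apply_mem hδT hY i k))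
        (P.algebraMap_mem ⟨_, inv_apply_mem_pvRing Y k j⟩)

end PicardVessiotRing

section Converse

variable {K L : Type*} [Field K] [Field L] [Algebra K L]
  {δK : Derivation ℤ K K} {δL : Derivation ℤ L L} {δT : Derivation ℤ (L ⊗[K] L) (L ⊗[K] L)}

theorem one_tmul_mem_span_constants {R : Subalgebra K L}
    (hR : ∀ x ∈ tensorSubring K L R,
      x ∈ Submodule.span R {c : L ⊗[K] L | c ∈ tensorSubring K L R ∧ δT c = 0})
    {a : L} (ha : a ∈ R) : (1 : L) ⊗ₜ[K] a ∈ Submodule.span L {c : L ⊗[K] L | δT c = 0} :=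
  Submodule.span_mono (fun _ hc => hc.2) (Submodule.span_subset_span R L _
    (hR _ (Subring.subset_closure (Or.inr ⟨a, ha, rfl⟩))))

theorem exists_finite_stable_submodule
    (hcompat : ∀ a, δL (algebraMap K L a) = algebraMap K L (δK a))
    (hδT : ∀ a b : L, δT (a ⊗ₜ[K] b) = δL a ⊗ₜ[K] b + a ⊗ₜ[K] δL b) {F : Finset L}
    (hF : ∀ a ∈ F, (1 : L) ⊗ₜ[K] a ∈ Submodule.span L {c : L ⊗[K] L | δT c = 0}) :
    ∃ V : Submodule K L, Module.Finite K V ∧ (F : Set L) ⊆ V ∧ (∀ v ∈ V, δL v ∈ V) ∧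
      ∀ v ∈ V, (1 : L) ⊗ₜ[K] v ∈ Submodule.span L {c : L ⊗[K] L | δT c = 0} := by
  classical
  obtain ⟨t, ht, hFt⟩ := Submodule.subset_span_finite_of_subset_span
    (t := F.image fun a => (1 : L) ⊗ₜ[K] a) (by simpa [Set.subset_def] using hF)
  let W : Submodule L (L ⊗[K] L) := Submodule.span L t
  have hW : ∀ w ∈ W, δT w ∈ W := fun w hw =>
    (isDerivationOver_tensor hδT).map_mem_span
      (fun c hc => (ht hc : δT c = 0).symm ▸ zero_mem _) hw
  let V : Submodule K L := Submodule.span K {x | ∃ a ∈ F, ∃ n : ℕ, x = δL^[n] a}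
  have hVW : ∀ v ∈ V, (1 : L) ⊗ₜ[K] v ∈ W := by
    suffices V ≤ (W.restrictScalars K).comap (TensorProduct.mk K L L 1) from this
    refine Submodule.span_le.mpr ?_
    rintro _ ⟨a, ha, n, rfl⟩
    change (1 : L) ⊗ₜ[K] δL^[n] a ∈ W
    induction n with
    | zero => exact hFt (by simpa using ⟨a, ha, rfl⟩)
    | succ n ih =>
      rw [Function.iterate_succ_apply']
      simpa [hδT] using hW _ ih
  refine ⟨V, finite_of_one_tmul_mem_span V t hVW,
    fun a ha => Submodule.subset_span ⟨a, ha, 0, rfl⟩,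
    fun v hv => (isDerivationOver_of_compat hcompat).map_mem_span ?_ hv,
    fun v hv => Submodule.span_mono ht (hVW v hv)⟩
  rintro _ ⟨a, ha, n, rfl⟩
  exact Submodule.subset_span ⟨a, ha, n + 1, (Function.iterate_succ_apply' _ _ _).symm⟩

theorem exists_isFundamentalMatrix_of_stable_submodule
    (hδT : ∀ a b : L, δT (a ⊗ₜ[K] b) = δL a ⊗ₜ[K] b + a ⊗ₜ[K] δL b)
    (hnonew : ∀ a : L, δL a = 0 → ∃ c : K, δK c = 0 ∧ algebraMap K L c = a)
    (V : Submodule K L) [Module.Finite K V] (hV : ∀ v ∈ V, δL v ∈ V)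
    (hconst : ∀ v ∈ V, (1 : L) ⊗ₜ[K] v ∈ Submodule.span L {c : L ⊗[K] L | δT c = 0}) :
    ∃ (n : ℕ) (A : Matrix (Fin n) (Fin n) K) (Y : GL (Fin n) L),
      IsFundamentalMatrix δL (A.map (algebraMap K L)) Y ∧
        (V : Set L) ⊆ Algebra.adjoin K (entries (Y : Matrix (Fin n) (Fin n) L)) := by
  let v := Module.finBasis K V
  have hsum (x : V) : (x : L) = ∑ k, v.repr x k • (v k : L) := by
    simpa only [map_sum, map_smul, Submodule.subtype_apply] using
      congrArg V.subtype (v.sum_repr x).symm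
  let A : Matrix (Fin _) (Fin _) K := Matrix.of fun j k => v.repr ⟨δL (v j), hV _ (v j).2⟩ k
  have hδv (j) : δL (v j) = ∑ k, A j k • (v k : L) := hsum ⟨δL (v j), _⟩
  have hindep : LinearIndependent K fun j => (v j : L) :=
    v.linearIndependent.map' V.subtype V.ker_subtype
  obtain ⟨Y, hY⟩ := (isDerivationOver_tensor hδT).exists_isFundamentalMatrix
    (Module.Flat.linearIndependent_one_tmul hindep) (B := A.map (algebraMap K L))
    (fun j => by simp [hδT, hδv, TensorProduct.tmul_sum])
    (fun j => hconst _ (v j).2)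
  refine ⟨_, A, Y, hY, fun x hx => ?_⟩
  have hxv : x = ∑ k, v.repr ⟨x, hx⟩ k • (v k : L) := hsum ⟨x, hx⟩
  rw [hxv]
  refine sum_mem fun k _ =>
    Subalgebra.smul_mem _ (hY.mem_adjoin_entries (v := fun k => (v k : L)) ?_ ?_ k) _
  · exact fun a ha => (hnonew a ha).imp fun _ hc => hc.2
  · simpa only [Algebra.smul_def, Matrix.map_apply] using hδv

end Converse

end PicardVessiot

open PicardVessiot in
theorem picardVessiot_iff_amanoMasuokaTakeuchi_general
    (K L : Type*) [Field K] [Field L] [Algebra K L]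
    (δK : Derivation ℤ K K) (δL : Derivation ℤ L L)
    (hcompat : ∀ a, δL (algebraMap K L a) = algebraMap K L (δK a))
    (hfg : FinitelyDeltaGeneratedO K L δL)
    (hnonew : ∀ a : L, δL a = 0 → ∃ c : K, δK c = 0 ∧ algebraMap K L c = a)
    (δT : Derivation ℤ (L ⊗[K] L) (L ⊗[K] L))
    (hδT : ∀ (a b : L), δT (a ⊗ₜ[K] b) = (δL a) ⊗ₜ[K] b + a ⊗ₜ[K] (δL b)) :
    IsPicardVessiotO K L δK δL ↔
      ∃ R : Subalgebra K L,
        (∀ x ∈ R, δL x ∈ R) ∧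
        (∀ x : L, ∃ p ∈ R, ∃ q ∈ R, q ≠ 0 ∧ x * q = p) ∧
        (∀ x ∈ tensorSubring K L R,
          x ∈ dotSet {y : L ⊗[K] L | ∃ a ∈ R, y = a ⊗ₜ[K] (1 : L)}
            {c : L ⊗[K] L | c ∈ tensorSubring K L R ∧ δT c = 0}) := by
  simp only [mem_dotSet_iff_mem_span]
  constructor
  · rintro ⟨_, n, A, Y, hY, htop⟩
    exact ⟨pvRing K Y, fun x => derivation_mem_pvRing hcompat hY,
      exists_mul_eq_of_adjoin_eq_top htop (Set.subset_union_left.trans Algebra.subset_adjoin),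
      fun x => mem_span_of_mem_tensorSubring_pvRing hδT hY⟩
  · rintro ⟨R, -, hquot, hgen⟩
    obtain ⟨F, hFR, hFtop⟩ := exists_finset_subset_forall_stable_eq_top hfg hquot
    obtain ⟨V, _, hFV, hV, hVconst⟩ := exists_finite_stable_submodule hcompat hδT
      fun a ha => one_tmul_mem_span_constants hgen (hFR ha)
    obtain ⟨n, A, Y, hY, hVY⟩ :=
      exists_isFundamentalMatrix_of_stable_submodule hδT hnonew V hV hVconst
    exact ⟨hnonew, n, A, Y, hY, hFtop _
      (fun x => hY.derivation_mem_intermediateField_adjoin_entries hcompat)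
      (hFV.trans (hVY.trans (IntermediateField.algebra_adjoin_le_adjoin K _)))⟩

/-- (Amano–Masuoka–Takeuchi) Let `K` be an ordinary differential field of
characteristic zero with algebraically closed constant field, and `L|K` a finitely
differentially generated extension with no new constants. Then `L|K` is Picard-Vessiot iff
there is a differential `K`-subalgebra `R` of `L` with quotient field `L` such that
`R ⊗_K R` is generated by constants as a left `R`-module, i.e.
`R ⊗_K R = R·(R ⊗_K R)^δ`. -/
theorem picardVessiot_iff_amanoMasuokaTakeuchi
    (K L : Type*) [Field K] [CharZero K] [Field L] [CharZero L] [Algebra K L]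
    (δK : Derivation ℤ K K) (δL : Derivation ℤ L L)
    (hcompat : ∀ a, δL (algebraMap K L a) = algebraMap K L (δK a))
    (halgcl : IsAlgClosed ↥(constantSubfieldO δK))
    (hfg : FinitelyDeltaGeneratedO K L δL)
    (hnonew : ∀ a : L, δL a = 0 → ∃ c : K, δK c = 0 ∧ algebraMap K L c = a)
    -- the (unique) differential ring structure on `L ⊗_K L`:
    (δT : Derivation ℤ (L ⊗[K] L) (L ⊗[K] L))
    (hδT : ∀ (a b : L), δT (a ⊗ₜ[K] b) = (δL a) ⊗ₜ[K] b + a ⊗ₜ[K] (δL b)) :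
    IsPicardVessiotO K L δK δL ↔
      ∃ R : Subalgebra K L,
        -- `R` is a differential subalgebra:
        (∀ x ∈ R, δL x ∈ R) ∧
        -- the quotient field of `R` is `L`:
        (∀ x : L, ∃ p ∈ R, ∃ q ∈ R, q ≠ 0 ∧ x * q = p) ∧
        -- `R ⊗_K R` (realized inside `L ⊗_K L`) is generated by its constants as a left
        -- `R`-module: every element is a finite sum `Σ rᵢcᵢ`, `rᵢ ∈ R ⊗ 1`,
        -- `cᵢ ∈ (R ⊗_K R)^δ`:
        (∀ x ∈ tensorSubring K L R,
          x ∈ dotSet {y : L ⊗[K] L | ∃ a ∈ R, y = a ⊗ₜ[K] (1 : L)}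
            {c : L ⊗[K] L | c ∈ tensorSubring K L R ∧ δT c = 0}) :=
  picardVessiot_iff_amanoMasuokaTakeuchi_general K L δK δL hcompat hfg hnonew δT hδT
end
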